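/- arXiv:1506.01512 — 3 statements merged into one kernel-verified Lean document; each statement's English description precedes it below -/
import Mathlib

section
/- Let k be a positive integer, let α ∈ (0,1], let I ⊆ ℝ be a bounded open interval, and let f : I → ℝ be continuous. Assume there exists g ∈ C^{k,α}(Ī, ℝ) such that |f(t)|^{k+α} = |g(t)| for all t ∈ I. Let p be defined by 1/p + 1/(k+α) = 1. Then f is absolutely continuous on I, its almost-everywhere derivative f' belongs to the weak Lebesgue space L^p_w(I), and ‖f'‖_{p,w,I} ≤ C(k) · max{ (Höld_{α,I}(g^{(k)}))^{1/(k+α)} |I|^{1/p}, ‖g'‖_{L^∞(I)}^{1/(k+α)} }, where C(k) is a constant depending only on k. -/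
open Set MeasureTheory Real

noncomputable section

/-- `f` is absolutely continuous on the set `S` : for every `ε > 0` there is `δ > 0` such
that for any finitely many non-overlapping intervals `[u i, v i] ⊆ S` of total length `< δ`
the sum `∑ ‖f (v i) - f (u i)‖` is `< ε`. -/
def AbsContOn {E : Type*} [NormedAddCommGroup E] (f : ℝ → E) (S : Set ℝ) : Prop :=
  ∀ ε : ℝ, 0 < ε → ∃ δ : ℝ, 0 < δ ∧
    ∀ (N : ℕ) (u v : Fin N → ℝ),
      (∀ i, u i ≤ v i ∧ Set.Icc (u i) (v i) ⊆ S) →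
      (∀ i j, i ≠ j → Disjoint (Set.Ioo (u i) (v i)) (Set.Ioo (u j) (v j))) →
      (∑ i, (v i - u i)) < δ →
      (∑ i, ‖f (v i) - f (u i)‖) < ε

/-- `d (i+1)` is the derivative of `d i` on `S` for all `i < k`; thus `d i` is the `i`-th
derivative of `d 0` on `S` for `i ≤ k`. -/
def DerivChain {E : Type*} [NormedAddCommGroup E] [NormedSpace ℝ E]
    (d : ℕ → ℝ → E) (k : ℕ) (S : Set ℝ) : Prop :=
  ∀ i < k, ∀ x ∈ S, HasDerivWithinAt (d i) (d (i + 1) x) S x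

/-- Hölder constant of exponent `a` of `g` on `S`. -/
def HolderConst {E : Type*} [NormedAddCommGroup E] (a : ℝ) (S : Set ℝ) (g : ℝ → E) : ℝ :=
  sSup {r : ℝ | ∃ x ∈ S, ∃ y ∈ S, x ≠ y ∧ r = ‖g x - g y‖ / |x - y| ^ a}

/-- Membership in `C^{k,1}(S)`, encoded via the chain of derivatives `d`:
`d 0` is `k` times differentiable with `i`-th derivative `d i`, and the top
derivative `d k` is Lipschitz. -/
def MemCk1 {E : Type*} [NormedAddCommGroup E] [NormedSpace ℝ E]
    (d : ℕ → ℝ → E) (k : ℕ) (S : Set ℝ) : Prop :=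
  DerivChain d k S ∧ ∃ L : ℝ, ∀ x ∈ S, ∀ y ∈ S, ‖d k x - d k y‖ ≤ L * |x - y|

/-- The `C^{k,1}`-norm: sup of all derivatives up to order `k` plus the Lipschitz
(Hölder-1) constant of the `k`-th derivative. -/
def CNorm {E : Type*} [NormedAddCommGroup E] (d : ℕ → ℝ → E) (k : ℕ) (S : Set ℝ) : ℝ :=
  sSup {r : ℝ | ∃ i ≤ k, ∃ x ∈ S, r = ‖d i x‖} + HolderConst 1 S (d k)


lemma gg_pairs (e0 e1 : ℝ → ℝ) (c c' η M : ℝ) (j N : ℕ) (x : ℕ → ℝ) (hη : 0 ≤ η) (hM : 0 ≤ M)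
    (hd : ∀ y ∈ Icc c c', HasDerivAt e0 (e1 y) y)
    (hx : ∀ i < 2 * N, x i ∈ Icc c c')
    (hlt : ∀ i, i + 1 < 2 * N → x i < x (i + 1))
    (hgap : ∀ i, i + 1 < 2 * N → x i + η ≤ x (i + 1))
    (hA : ∀ i < 2 * N, |e0 (x i)| ≤ M * η ^ (j + 1)) :
    ∃ y : ℕ → ℝ, (∀ i < N, y i ∈ Icc c c') ∧ (∀ i, i + 1 < N → y i < y (i + 1)) ∧
      (∀ i, i + 1 < N → y i + η ≤ y (i + 1)) ∧ (∀ i < N, |e1 (y i)| ≤ (2 * M) * η ^ j) := by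
  have key : ∀ i, ∃ y, i < N → (y ∈ Ioo (x (2 * i)) (x (2 * i + 1)) ∧
      |e1 y| ≤ (2 * M) * η ^ j) := by
    intro i
    by_cases hi : i < N
    swap
    · exact ⟨0, fun h => absurd h hi⟩
    have h1 := hx (2 * i) (by omega)
    have h2 := hx (2 * i + 1) (by omega)
    have h3 := hlt (2 * i) (by omega)
    have h4 := hgap (2 * i) (by omega)
    have h5 := hA (2 * i) (by omega)
    have h6 := hA (2 * i + 1) (by omega)
    have hsub : Icc (x (2 * i)) (x (2 * i + 1)) ⊆ Icc c c' := Icc_subset_Icc h1.1 h2.2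
    obtain ⟨y, hy, hye⟩ := exists_hasDerivAt_eq_slope e0 e1 h3
      (fun z hz => (hd z (hsub hz)).continuousAt.continuousWithinAt)
      (fun z hz => hd z (hsub (Ioo_subset_Icc_self hz)))
    refine ⟨y, fun _ => ⟨hy, ?_⟩⟩
    have hg : 0 < x (2 * i + 1) - x (2 * i) := by linarith
    rw [hye, abs_div, abs_of_pos hg, div_le_iff₀ hg]
    have : |e0 (x (2 * i + 1)) - e0 (x (2 * i))| ≤ 2 * (M * η ^ (j + 1)) := by
      have := abs_sub (e0 (x (2 * i + 1))) (e0 (x (2 * i)))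
      linarith
    refine this.trans ?_
    have h7 : η ≤ x (2 * i + 1) - x (2 * i) := by linarith
    have h8 : 0 ≤ 2 * M * η ^ j := by positivity
    calc 2 * (M * η ^ (j + 1)) = 2 * M * η ^ j * η := by ring
      _ ≤ _ := mul_le_mul_of_nonneg_left h7 h8
  choose y hy using key
  refine ⟨y, ?_, ?_, ?_, fun i hi => (hy i hi).2⟩
  · intro i hi
    have h1 := hx (2 * i) (by omega)
    have h2 := hx (2 * i + 1) (by omega)
    have h := (hy i hi).1
    exact ⟨by linarith [h1.1, h.1], by linarith [h2.2, h.2]⟩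
  · intro i hi
    have h1 := (hy i (by omega)).1
    have h2 := (hy (i + 1) hi).1
    have h3 := hlt (2 * i + 1) (by omega)
    have e : 2 * (i + 1) = 2 * i + 1 + 1 := by ring
    rw [e] at h2
    linarith [h1.2, h2.1]
  · intro i hi
    have h1 := (hy i (by omega)).1
    have h2 := (hy (i + 1) hi).1
    have h3 := hgap (2 * i + 1) (by omega)
    have e : 2 * (i + 1) = 2 * i + 1 + 1 := by ring
    rw [e] at h2
    linarith [h1.2, h2.1]

lemma gg_chain (c c' η α H : ℝ) (hc : c < c') (hη : 0 ≤ η) (hηc : η ≤ c' - c) (hH : 0 ≤ H)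
    (hα : 0 < α) :
    ∀ (j : ℕ) (e : ℕ → ℝ → ℝ) (M : ℝ) (x : ℕ → ℝ), 0 ≤ M →
    (∀ i < j, ∀ y ∈ Icc c c', HasDerivAt (e i) (e (i + 1) y) y) →
    (∀ y ∈ Icc c c', ∀ z ∈ Icc c c', |e j y - e j z| ≤ H * |y - z| ^ α) →
    (∀ i < 2 ^ j, x i ∈ Icc c c') →
    (∀ i, i + 1 < 2 ^ j → x i < x (i + 1)) →
    (∀ i, i + 1 < 2 ^ j → x i + η ≤ x (i + 1)) →
    (∀ i < 2 ^ j, |e 0 (x i)| ≤ M * η ^ j) →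
    ∀ y ∈ Icc c c', |e 0 y| ≤ 3 ^ j * M * (c' - c) ^ j + H * (c' - c) ^ ((j : ℝ) + α) := by
  intro j
  have hL : 0 < c' - c := by linarith
  induction j with
  | zero =>
    intro e M x hM _ hHol hx _ _ hA y hy
    have h0 := hx 0 (by norm_num)
    have h1 := hHol y hy _ h0
    have h2 := hA 0 (by norm_num)
    have h3 : |y - x 0| ^ α ≤ (c' - c) ^ α := by
      apply Real.rpow_le_rpow (abs_nonneg _) _ hα.le
      rw [abs_le]; constructor <;> linarith [hy.1, hy.2, h0.1, h0.2]
    have h4 := mul_le_mul_of_nonneg_left h3 hH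
    have h5 := abs_sub_abs_le_abs_sub (e 0 y) (e 0 (x 0))
    simp at h2 ⊢
    linarith
  | succ j ih =>
    intro e M x hM hd hHol hx hlt hgap hA y hy
    have e2 : 2 ^ (j + 1) = 2 * 2 ^ j := by ring
    rw [e2] at hx hlt hgap hA
    obtain ⟨z, hz1, hz2, hz3, hz4⟩ := gg_pairs (e 0) (e 1) c c' η M j (2 ^ j) x hη hM
      (hd 0 (by omega)) hx hlt hgap hA
    have hb := ih (fun i => e (i + 1)) (2 * M) z (by positivity)
      (fun i hi y hy => hd (i + 1) (by omega) y hy) hHol hz1 hz2 hz3 hz4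
    have h0 := hx 0 (by positivity)
    have hA0 := hA 0 (by positivity)
    set S := 3 ^ j * (2 * M) * (c' - c) ^ j + H * (c' - c) ^ ((j : ℝ) + α) with hS
    have hmv : ‖e 0 y - e 0 (x 0)‖ ≤ S * ‖y - x 0‖ :=
      (convex_Icc c c').norm_image_sub_le_of_norm_hasDerivWithin_le
        (fun w hw => (hd 0 (by omega) w hw).hasDerivWithinAt) (fun w hw => hb w hw) h0 hy
    rw [Real.norm_eq_abs, Real.norm_eq_abs] at hmv
    have hS0 : 0 ≤ S := by positivity
    have h3 : |y - x 0| ≤ c' - c := by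
      rw [abs_le]; constructor <;> linarith [hy.1, hy.2, h0.1, h0.2]
    have h4 := mul_le_mul_of_nonneg_left h3 hS0
    have h5 := abs_sub_abs_le_abs_sub (e 0 y) (e 0 (x 0))
    have h6 : M * η ^ (j + 1) ≤ M * (c' - c) ^ (j + 1) := by gcongr
    have h7 : (c' - c) ^ (((j + 1 : ℕ) : ℝ) + α) = (c' - c) ^ ((j : ℝ) + α) * (c' - c) := by
      rw [← Real.rpow_add_one hL.ne']; congr 1; push_cast; ring
    rw [h7]
    have h8 : M * (c' - c) ^ (j + 1) * 1 ≤ M * (c' - c) ^ (j + 1) * 3 ^ j := by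
      apply mul_le_mul_of_nonneg_left _ (by positivity)
      exact one_le_pow₀ (by norm_num)
    have h9 : S * (c' - c) = 2 * (M * (c' - c) ^ (j + 1) * 3 ^ j)
        + H * ((c' - c) ^ ((j : ℝ) + α) * (c' - c)) := by
      rw [hS]; ring
    have h10 : 3 ^ (j + 1) * M * (c' - c) ^ (j + 1) = 3 * (M * (c' - c) ^ (j + 1) * 3 ^ j) := by
      ring
    rw [h10]
    linarith

noncomputable def ggC (j : ℕ) : ℝ := 2 * 3 ^ j * (2 ^ (j + 1)) ^ (j + 1)

lemma ggC_ge (j : ℕ) : 2 ≤ ggC j := by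
  have h1 : (1 : ℝ) ≤ 3 ^ j := one_le_pow₀ (by norm_num)
  have h2 : (1 : ℝ) ≤ (2 ^ (j + 1)) ^ (j + 1) := one_le_pow₀ (one_le_pow₀ (by norm_num))
  unfold ggC
  nlinarith

lemma gg_interp (c c' α H A : ℝ) (hc : c < c') (hH : 0 ≤ H) (hα : 0 < α) (j : ℕ) (d : ℕ → ℝ → ℝ)
    (hd : ∀ i < j + 1, ∀ y ∈ Icc c c', HasDerivAt (d i) (d (i + 1) y) y)
    (hHol : ∀ y ∈ Icc c c', ∀ z ∈ Icc c c', |d (j + 1) y - d (j + 1) z| ≤ H * |y - z| ^ α)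
    (hA : ∀ y ∈ Icc c c', |d 0 y| ≤ A) :
    ∀ y ∈ Icc c c', |d 1 y| ≤ ggC j * A / (c' - c) + H * (c' - c) ^ ((j : ℝ) + α) := by
  have hL : 0 < c' - c := by linarith
  have hA0 : 0 ≤ A := (abs_nonneg _).trans (hA c ⟨le_rfl, hc.le⟩)
  set η := (c' - c) / 2 ^ (j + 1) with hη
  have hη0 : 0 < η := by positivity
  have h1 : (1 : ℝ) ≤ 2 ^ (j + 1) := one_le_pow₀ (by norm_num)
  have hηL : η ≤ c' - c := div_le_self hL.le h1
  have hηe : η * 2 ^ (j + 1) = c' - c := by rw [hη]; field_simp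
  have hx : ∀ i : ℕ, i < 2 * 2 ^ j → c + (i : ℝ) * η ∈ Icc c c' := by
    intro i hi
    refine ⟨by nlinarith [Nat.cast_nonneg (α := ℝ) i], ?_⟩
    have : (i : ℝ) ≤ 2 ^ (j + 1) := by
      have : i ≤ 2 ^ (j + 1) := by rw [pow_succ]; omega
      exact_mod_cast this
    nlinarith
  obtain ⟨z, hz1, hz2, hz3, hz4⟩ := gg_pairs (d 0) (d 1) c c' η (A / η ^ (j + 1)) j (2 ^ j)
      (fun i => c + (i : ℝ) * η) hη0.le (by positivity)
      (hd 0 (by omega)) hx (fun i _ => by push_cast; linarith)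
      (fun i _ => by push_cast; linarith) (fun i hi => by
        rw [div_mul_cancel₀ _ (by positivity)]; exact hA _ (hx i hi))
  intro y hy
  have := gg_chain c c' η α H hc hη0.le hηL hH hα j (fun i => d (i + 1)) _ z (by positivity)
    (fun i hi => hd (i + 1) (by omega)) hHol hz1 hz2 hz3 hz4 y hy
  refine this.trans (le_of_eq ?_)
  congr 1
  rw [hη, ggC, div_pow]
  field_simp
  ring

/-- If neither g nor its derivative vanishes, `|g|` is at most `|g t|` on one side of `t`. -/
lemma gg_side (g g' : ℝ → ℝ) (t ρ : ℝ) 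
    (hd : ∀ y ∈ Icc (t - ρ) (t + ρ), HasDerivAt g (g' y) y)
    (hz : ∀ y ∈ Icc (t - ρ) (t + ρ), g y ≠ 0 ∧ g' y ≠ 0) :
    (∀ y ∈ Icc (t - ρ) t, |g y| ≤ |g t|) ∨ (∀ y ∈ Icc t (t + ρ), |g y| ≤ |g t|) := by
  by_contra! hcon
  obtain ⟨⟨x, hx, hxt⟩, ⟨y, hy, hyt⟩⟩ := hcon
  have hxy : x ≤ y := hx.2.trans hy.1
  have hsub : Icc x y ⊆ Icc (t - ρ) (t + ρ) := Icc_subset_Icc hx.1 hy.2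
  have hcont : ContinuousOn (fun s => |g s|) (Icc x y) :=
    fun s hs => (hd s (hsub hs)).continuousAt.continuousWithinAt.abs
  obtain ⟨w, hw, hmin⟩ := isCompact_Icc.exists_isMinOn (nonempty_Icc.2 hxy) hcont
  have hmin' : ∀ s ∈ Icc x y, |g w| ≤ |g s| := fun s hs => hmin hs
  have hwt := hmin' t ⟨hx.2, hy.1⟩
  have hwx : x < w := lt_of_le_of_ne hw.1 (by rintro rfl; linarith)
  have hwy : w < y := lt_of_le_of_ne hw.2 (by rintro rfl; linarith)
  have hloc : IsLocalMin (fun s => g s ^ 2) w := by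
    filter_upwards [Icc_mem_nhds hwx hwy] with s hs
    exact sq_le_sq.2 (hmin' s hs)
  have hder := hloc.hasDerivAt_eq_zero ((hd w (hsub hw)).pow 2)
  have := hz w (hsub hw)
  simp at hder
  tauto

lemma gg_local_zero (a b α H r δ t : ℝ) (hH : 0 ≤ H) (hα : 0 < α) (j : ℕ) (d : ℕ → ℝ → ℝ)
    (hd : ∀ i < j + 1, ∀ y ∈ Ioo a b, HasDerivAt (d i) (d (i + 1) y) y)
    (hHol : ∀ y ∈ Ioo a b, ∀ z ∈ Ioo a b, |d (j + 1) y - d (j + 1) z| ≤ H * |y - z| ^ α)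
    (hr : 0 < r) (hδ : 0 < δ)
    (hrH : (2 * ggC j) ^ ((j : ℝ) + α + 1) * H < r ^ ((j : ℝ) + α + 1))
    (ht1 : |d 1 t| = r ^ ((j : ℝ) + α + 1) * δ ^ ((j : ℝ) + α))
    (ht0 : |d 0 t| ≤ (r * δ) ^ ((j : ℝ) + α + 1))
    (hta : a < t - 2 * ggC j * δ) (htb : t + 2 * ggC j * δ < b) :
    ∃ z ∈ Icc (t - 2 * ggC j * δ) (t + 2 * ggC j * δ), d 0 z = 0 ∨ d 1 z = 0 := by
  by_contra! hz
  have hC := ggC_ge j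
  set B := 2 * ggC j with hB
  have hBδ : 0 < B * δ := by positivity
  have hsub : Icc (t - B * δ) (t + B * δ) ⊆ Ioo a b := fun y hy =>
    ⟨by linarith [hy.1], by linarith [hy.2]⟩
  have hs : 0 < (j : ℝ) + α := by positivity
  have key : |d 1 t| ≤ ggC j * |d 0 t| / (B * δ) + H * (B * δ) ^ ((j : ℝ) + α) := by
    rcases gg_side (d 0) (d 1) t (B * δ) (fun y hy => hd 0 (by omega) y (hsub hy)) hz with h | h
    · have hs : Icc (t - B * δ) t ⊆ Ioo a b :=
        (Icc_subset_Icc le_rfl (by linarith)).trans hsub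
      have := gg_interp (t - B * δ) t α H _ (by linarith) hH hα j d
        (fun i hi y hy => hd i hi y (hs hy)) (fun y hy z hz => hHol y (hs hy) z (hs hz)) h t
        ⟨by linarith, le_rfl⟩
      simpa using this
    · have hs : Icc t (t + B * δ) ⊆ Ioo a b :=
        (Icc_subset_Icc (by linarith) le_rfl).trans hsub
      have := gg_interp t (t + B * δ) α H _ (by linarith) hH hα j d
        (fun i hi y hy => hd i hi y (hs hy)) (fun y hy z hz => hHol y (hs hy) z (hs hz)) h t
        ⟨le_rfl, by linarith⟩
      simpa using this
  have e1 : (r * δ) ^ ((j : ℝ) + α + 1) = |d 1 t| * δ := by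
    rw [Real.mul_rpow hr.le hδ.le, Real.rpow_add_one hδ.ne', ht1]; ring
  have h2 : ggC j * |d 0 t| / (B * δ) ≤ |d 1 t| / 2 := by
    rw [e1] at ht0
    rw [div_le_iff₀ hBδ, hB]
    nlinarith
  have h3 : H * (B * δ) ^ ((j : ℝ) + α) = H * B ^ ((j : ℝ) + α) * δ ^ ((j : ℝ) + α) := by
    rw [Real.mul_rpow (by positivity) hδ.le]; ring
  have hp : 0 < δ ^ ((j : ℝ) + α) := by positivity
  have h4 : r ^ ((j : ℝ) + α + 1) * δ ^ ((j : ℝ) + α) ≤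
      2 * (H * B ^ ((j : ℝ) + α)) * δ ^ ((j : ℝ) + α) := by
    rw [← ht1]; linarith
  have h5 := le_of_mul_le_mul_right h4 hp
  have h6 : 0 ≤ H * B ^ ((j : ℝ) + α) := by positivity
  rw [Real.rpow_add_one (by positivity : B ≠ 0)] at hrH
  nlinarith

/-- Group claim: `2^(j+1)` consecutive intervals containing zeros of g or its derivative. -/
lemma gg_group (a b α H : ℝ) (hH : 0 ≤ H) (hα : 0 < α) (j : ℕ) (d : ℕ → ℝ → ℝ)
    (hd : ∀ i < j + 1, ∀ y ∈ Ioo a b, HasDerivAt (d i) (d (i + 1) y) y)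
    (hHol : ∀ y ∈ Ioo a b, ∀ z ∈ Ioo a b, |d (j + 1) y - d (j + 1) z| ≤ H * |y - z| ^ α)
    (u v : ℕ → ℝ) (c c' : ℝ) (hc : a < c) (hc' : c' < b)
    (hu : ∀ i < 2 ^ (j + 1), c ≤ u i ∧ u i < v i ∧ v i ≤ c')
    (huv : ∀ i, i + 1 < 2 ^ (j + 1) → v i < u (i + 1))
    (hz : ∀ i < 2 ^ (j + 1), ∃ z ∈ Icc (u i) (v i), d 0 z = 0 ∨ d 1 z = 0) :
    ∀ y ∈ Icc c c', |d 1 y| ≤ H * (c' - c) ^ ((j : ℝ) + α) := by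
  have h0 := hu 0 (by positivity)
  have hsub : Icc c c' ⊆ Ioo a b := fun y hy => ⟨by linarith [hy.1], by linarith [hy.2]⟩
  rw [pow_succ] at hu huv hz
  have key : ∀ i, ∃ z, i < 2 ^ j → (z ∈ Icc (u (2 * i)) (v (2 * i + 1)) ∧ d 1 z = 0) := by
    intro i
    by_cases hi : i < 2 ^ j
    swap
    · exact ⟨0, fun h => absurd h hi⟩
    have g1 := hu (2 * i) (by omega)
    have g2 := hu (2 * i + 1) (by omega)
    have g3 := huv (2 * i) (by omega)
    obtain ⟨z1, hz1, hz1'⟩ := hz (2 * i) (by omega)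
    obtain ⟨z2, hz2, hz2'⟩ := hz (2 * i + 1) (by omega)
    rcases hz1' with e1 | e1
    swap
    · exact ⟨z1, fun _ => ⟨⟨hz1.1, by linarith [hz1.2]⟩, e1⟩⟩
    rcases hz2' with e2 | e2
    swap
    · exact ⟨z2, fun _ => ⟨⟨by linarith [hz2.1], hz2.2⟩, e2⟩⟩
    have hlt : z1 < z2 := by linarith [hz1.2, hz2.1]
    have hs : Icc z1 z2 ⊆ Ioo a b := 
      (Icc_subset_Icc (by linarith [hz1.1]) (by linarith [hz2.2])).trans hsub
    obtain ⟨w, hw, hwe⟩ := exists_hasDerivAt_eq_zero hlt 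
      (fun y hy => (hd 0 (by omega) y (hs hy)).continuousAt.continuousWithinAt)
      (by rw [e1, e2]) (fun y hy => hd 0 (by omega) y (hs (Ioo_subset_Icc_self hy)))
    exact ⟨w, fun _ => ⟨⟨by linarith [hw.1, hz1.1], by linarith [hw.2, hz2.2]⟩, hwe⟩⟩
  choose z hz' using key
  have hlt : ∀ i, i + 1 < 2 ^ j → z i < z (i + 1) := by
    intro i hi
    have h1 := (hz' i (by omega)).1
    have h2 := (hz' (i + 1) hi).1
    have h3 := huv (2 * i + 1) (by omega)
    have e : 2 * (i + 1) = 2 * i + 1 + 1 := by ring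
    rw [e] at h2
    linarith [h1.2, h2.1]
  intro y hy
  have := gg_chain c c' 0 α H (by linarith) le_rfl (by linarith) hH hα j (fun i => d (i + 1)) 0 z
    le_rfl (fun i hi y hy => hd (i + 1) (by omega) y (hsub hy))
    (fun y hy z hz => hHol y (hsub hy) z (hsub hz)) 
    (fun i hi => by
      have g1 := hu (2 * i) (by omega)
      have g2 := hu (2 * i + 1) (by omega)
      have := (hz' i hi).1
      exact ⟨by linarith [this.1], by linarith [this.2]⟩) hlt (fun i hi => by
      have := hlt i hi; linarith)
    (fun i hi => by simp [(hz' i hi).2]) y hy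
  simpa using this

/-- Sum bound for ordered disjoint intervals. -/
lemma gg_sum (N : ℕ) (hN : 0 < N) (a b κ D B : ℝ) (hκ : 0 ≤ κ) (hB : 0 < B) (P : ℝ → ℝ → Prop)
    (hPD : ∀ t δ, P t δ → 0 < δ ∧ δ ≤ D)
    (hgrp : ∀ (c c' : ℝ) (t δ : ℕ → ℝ), 
      (∀ i < N, P (t i) (δ i) ∧ c ≤ t i - B * δ i ∧ t i + B * δ i ≤ c') →
      (∀ i, i + 1 < N → t i + B * δ i < t (i + 1) - B * δ (i + 1)) →
      a < c → c' < b → ∀ i < N, δ i ≤ κ * (c' - c)) :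
    ∀ (n : ℕ) (c : ℝ) (t δ : ℕ → ℝ), a < c → c ≤ b →
      (∀ i < n, P (t i) (δ i) ∧ t i + B * δ i < b) →
      (0 < n → c ≤ t 0 - B * δ 0) →
      (∀ i, i + 1 < n → t i + B * δ i < t (i + 1) - B * δ (i + 1)) →
      ∑ i ∈ Finset.range n, δ i ≤ N * (κ * (b - c)) + N * max D 0 := by
  intro n
  induction n using Nat.strong_induction_on with
  | _ n ih =>
  intro c t δ hac hcb hP hc hlt
  by_cases hn : n ≤ N
  · have h1 : ∑ i ∈ Finset.range n, δ i ≤ ∑ i ∈ Finset.range n, max D 0 :=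
      Finset.sum_le_sum fun i hi =>
        ((hPD _ _ (hP i (Finset.mem_range.1 hi)).1).2).trans (le_max_left _ _)
    have h2 : ∑ i ∈ Finset.range n, max D 0 ≤ N * max D 0 := by
      simp only [Finset.sum_const, Finset.card_range, nsmul_eq_mul]
      have : (n : ℝ) ≤ N := by exact_mod_cast hn
      exact mul_le_mul_of_nonneg_right this (le_max_right _ _)
    have h3 : 0 ≤ N * (κ * (b - c)) := by
      have : 0 ≤ b - c := by linarith
      positivity
    linarith
  push Not at hn
  obtain ⟨n', rfl⟩ := Nat.exists_eq_add_of_le hn.le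
  have hmono : ∀ i, i < N + n' → ∀ l ≤ i, t l - B * δ l ≤ t i - B * δ i 
      ∧ t l + B * δ l ≤ t i + B * δ i := by
    intro i
    induction i with
    | zero => intro _ l hl; obtain rfl : l = 0 := by omega
              exact ⟨le_rfl, le_rfl⟩
    | succ i ihi =>
      intro hi l hl
      rcases Nat.lt_or_ge l (i + 1) with h | h
      · have h1 := ihi (by omega) l (by omega)
        have h2 := hlt i hi
        have h3 := mul_pos hB (hPD _ _ (hP i (by omega)).1).1
        have h4 := mul_pos hB (hPD _ _ (hP (i + 1) (by omega)).1).1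
        exact ⟨by linarith, by linarith⟩
      · obtain rfl : l = i + 1 := by omega
        exact ⟨le_rfl, le_rfl⟩
  set c' := t (N - 1) + B * δ (N - 1) with hc'
  have hc'b : c' < b := (hP (N - 1) (by omega)).2
  have hg := hgrp c c' t δ (fun i hi => ⟨(hP i (by omega)).1, 
    (hc (by omega)).trans (hmono i (by omega) 0 (by omega)).1,
    (hmono (N - 1) (by omega) i (by omega)).2⟩) (fun i hi => hlt i (by omega)) hac hc'b
  have hac' : a < c' := by
    have h1 := (hc (by omega)).trans (hmono (N - 1) (by omega) 0 (by omega)).1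
    have h3 := mul_pos hB (hPD _ _ (hP (N - 1) (by omega)).1).1
    linarith
  have hr := ih n' (by omega) c' (fun i => t (N + i)) (fun i => δ (N + i)) hac' hc'b.le
    (fun i hi => hP (N + i) (by omega))
    (fun h => by
      have := hlt (N - 1) (by omega)
      rw [show N - 1 + 1 = N by omega] at this
      simpa using this.le)
    (fun i hi => hlt (N + i) (by omega))
  rw [Finset.sum_range_add]
  have h1 : ∑ i ∈ Finset.range N, δ i ≤ ∑ i ∈ Finset.range N, κ * (c' - c) :=
    Finset.sum_le_sum fun i hi => hg i (Finset.mem_range.1 hi)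
  simp only [Finset.sum_const, Finset.card_range, nsmul_eq_mul] at h1
  have : (N : ℝ) * (κ * (b - c)) = N * (κ * (c' - c)) + N * (κ * (b - c')) := by ring
  linarith

lemma gg_sum_finset (N : ℕ) (hN : 0 < N) (a b κ D B : ℝ) (hκ : 0 ≤ κ) (hB : 0 < B)
    (hab : a < b) (E : Set ℝ) (δ : ℝ → ℝ)
    (hPD : ∀ t ∈ E, 0 < δ t ∧ δ t ≤ D)
    (hPI : ∀ t ∈ E, a < t - B * δ t ∧ t + B * δ t < b)
    (hgrp : ∀ (c c' : ℝ) (t : ℕ → ℝ), 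
      (∀ i < N, t i ∈ E ∧ c ≤ t i - B * δ (t i) ∧ t i + B * δ (t i) ≤ c') →
      (∀ i, i + 1 < N → t i + B * δ (t i) < t (i + 1) - B * δ (t (i + 1))) →
      a < c → c' < b → ∀ i < N, δ (t i) ≤ κ * (c' - c))
    (S : Finset ℝ) (hS : (S : Set ℝ) ⊆ E)
    (hdis : (S : Set ℝ).PairwiseDisjoint fun t => Metric.closedBall t (B * δ t)) :
    ∑ t ∈ S, δ t ≤ N * (κ * (b - a)) + N * max D 0 := by
  have hba : 0 ≤ b - a := by linarith
  rcases S.eq_empty_or_nonempty with rfl | hne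
  · simp only [Finset.sum_empty]
    have : 0 ≤ max D 0 := le_max_right _ _
    positivity
  set n := S.card with hn
  have hnpos : 0 < n := hne.card_pos
  let e := S.orderEmbOfFin rfl
  let t : ℕ → ℝ := fun i => if h : i < n then e ⟨i, h⟩ else 0
  have ht : ∀ i, (h : i < n) → t i = e ⟨i, h⟩ := fun i h => dif_pos h
  have htS : ∀ i, i < n → t i ∈ S := fun i h => by
    rw [ht i h]; exact S.orderEmbOfFin_mem rfl _
  have hsum : ∑ x ∈ S, δ x = ∑ i ∈ Finset.range n, δ (t i) := by
    rw [Finset.sum_range]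
    have h1 : ∑ i : Fin n, δ (t i) = ∑ i : Fin n, δ (e i) :=
      Finset.sum_congr rfl fun i _ => by rw [ht i i.2]
    rw [h1]
    have h2 := Finset.sum_map Finset.univ e.toEmbedding δ
    rw [Finset.map_orderEmbOfFin_univ S rfl] at h2
    exact h2
  have hlt : ∀ i, i + 1 < n → t i + B * δ (t i) < t (i + 1) - B * δ (t (i + 1)) := by
    intro i hi
    have h1 : t i < t (i + 1) := by
      rw [ht i (by omega), ht (i + 1) hi]
      exact e.strictMono (by simp [Fin.lt_def])
    have hd := hdis (htS i (by omega)) (htS (i + 1) hi) h1.ne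
    have p1 := mul_pos hB (hPD _ (hS (htS i (by omega)))).1
    have p2 := mul_pos hB (hPD _ (hS (htS (i + 1) hi))).1
    by_contra! hcon
    have q1 : max (t i) (t (i + 1) - B * δ (t (i + 1))) ∈ 
        Metric.closedBall (t i) (B * δ (t i)) := by
      rw [Real.closedBall_eq_Icc]
      exact ⟨by have := le_max_left (t i) (t (i + 1) - B * δ (t (i + 1))); linarith,
        max_le (by linarith) hcon⟩
    have q2 : max (t i) (t (i + 1) - B * δ (t (i + 1))) ∈ 
        Metric.closedBall (t (i + 1)) (B * δ (t (i + 1))) := by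
      rw [Real.closedBall_eq_Icc]
      exact ⟨le_max_right _ _, max_le (by linarith) (by linarith)⟩
    exact Set.disjoint_left.1 hd q1 q2
  have h0 := hPI _ (hS (htS 0 hnpos))
  have p0 := mul_pos hB (hPD _ (hS (htS 0 hnpos))).1
  have := gg_sum N hN a b κ D B hκ hB (fun t x => t ∈ E ∧ x = δ t)
    (by rintro t _ ⟨h, rfl⟩; exact hPD t h)
    (by
      intro c c' t x h1 h2 hac hcb i hi
      have hx : ∀ i < N, x i = δ (t i) := fun i hi => (h1 i hi).1.2
      rw [hx i hi]
      refine hgrp c c' t (fun i hi => ⟨(h1 i hi).1.1, ?_⟩) (fun i hi => ?_) hac hcb i hi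
      · rw [← hx i hi]; exact (h1 i hi).2
      · rw [← hx i (by omega), ← hx (i + 1) hi]; exact h2 i hi)
    n (t 0 - B * δ (t 0)) t (fun i => δ (t i)) h0.1 (by linarith) 
    (fun i hi => ⟨⟨hS (htS i hi), rfl⟩, (hPI _ (hS (htS i hi))).2⟩) (fun _ => le_rfl) hlt
  rw [hsum]
  refine this.trans ?_
  gcongr
  exact h0.1.le

lemma gg_vitali (N : ℕ) (hN : 0 < N) (a b κ D B : ℝ) (hκ : 0 ≤ κ) (hB : 0 < B)
    (hab : a < b) (E : Set ℝ) (δ : ℝ → ℝ)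
    (hPD : ∀ t ∈ E, 0 < δ t ∧ δ t ≤ D)
    (hPI : ∀ t ∈ E, a < t - B * δ t ∧ t + B * δ t < b)
    (hgrp : ∀ (c c' : ℝ) (t : ℕ → ℝ), 
      (∀ i < N, t i ∈ E ∧ c ≤ t i - B * δ (t i) ∧ t i + B * δ (t i) ≤ c') →
      (∀ i, i + 1 < N → t i + B * δ (t i) < t (i + 1) - B * δ (t (i + 1))) →
      a < c → c' < b → ∀ i < N, δ (t i) ≤ κ * (c' - c)) :
    volume E ≤ ENNReal.ofReal (10 * B * (N * (κ * (b - a)) + N * max D 0)) := by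
  obtain ⟨u, huE, hdis, hcov⟩ := Vitali.exists_disjoint_subfamily_covering_enlargement_closedBall
    E (fun t => t) (fun t => B * δ t) (B * D)
    (fun t ht => mul_le_mul_of_nonneg_left (hPD t ht).2 hB.le) 5 (by norm_num)
  have hcount : u.Countable := hdis.countable_of_nonempty_interior (fun t ht => by
    refine ⟨t, ?_⟩
    rw [interior_closedBall _ (mul_pos hB (hPD t (huE ht)).1).ne']
    exact Metric.mem_ball_self (mul_pos hB (hPD t (huE ht)).1))
  have hsub : E ⊆ ⋃ t ∈ u, Metric.closedBall t (5 * (B * δ t)) := by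
    intro x hx
    obtain ⟨y, hy, hxy⟩ := hcov x hx
    exact mem_biUnion hy (hxy (Metric.mem_closedBall_self (mul_pos hB (hPD x hx).1).le))
  refine (measure_mono hsub).trans ?_
  refine (measure_biUnion_le volume hcount _).trans ?_
  rw [ENNReal.tsum_eq_iSup_sum]
  refine iSup_le fun S => ?_
  classical
  set T : Finset ℝ := S.map (Function.Embedding.subtype _) with hT
  have hTu : (T : Set ℝ) ⊆ u := by
    intro x hx
    simp [hT] at hx
    exact hx.1
  have h1 : ∑ i ∈ S, volume (Metric.closedBall (i : ℝ) (5 * (B * δ i))) =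
      ∑ x ∈ T, ENNReal.ofReal (10 * B * δ x) := by
    rw [hT, Finset.sum_map]
    refine Finset.sum_congr rfl fun i _ => ?_
    rw [Real.volume_closedBall]
    simp only [Function.Embedding.subtype_apply]
    congr 1; ring
  rw [h1, ← ENNReal.ofReal_sum_of_nonneg (fun x hx => by
    have := (hPD x (huE (hTu hx))).1; positivity), ← Finset.mul_sum]
  apply ENNReal.ofReal_le_ofReal
  gcongr
  exact gg_sum_finset N hN a b κ D B hκ hB hab E δ hPD hPI hgrp T (hTu.trans huE)
    (hdis.subset hTu)

noncomputable def ggH (m : ℝ) (d : ℕ → ℝ → ℝ) (t : ℝ) : ℝ := |d 1 t| * |d 0 t| ^ (m⁻¹ - 1) / m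

lemma gg_weak (a b α H G r : ℝ) (hab : a < b) (hH : 0 ≤ H) (hα : 0 < α) (j : ℕ) (d : ℕ → ℝ → ℝ)
    (hd : ∀ i < j + 1, ∀ y ∈ Ioo a b, HasDerivAt (d i) (d (i + 1) y) y)
    (hHol : ∀ y ∈ Ioo a b, ∀ z ∈ Ioo a b, |d (j + 1) y - d (j + 1) z| ≤ H * |y - z| ^ α)
    (hG : ∀ y ∈ Ioo a b, |d 1 y| ≤ G)
    (hr : 0 < r)
    (hrH : (2 * ggC j) ^ ((j : ℝ) + α + 1) * H < r ^ ((j : ℝ) + α + 1)) :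
    volume {t | t ∈ Ioo a b ∧ r < ggH ((j : ℝ) + α + 1) d t} ≤ ENNReal.ofReal
      (22 * (2 * ggC j) * 2 ^ (j + 1) * max ((H / r ^ ((j : ℝ) + α + 1)) ^ ((j : ℝ) + α)⁻¹ * (b - a))
        ((G / r ^ ((j : ℝ) + α + 1)) ^ ((j : ℝ) + α)⁻¹)) := by
  have hC := ggC_ge j
  set B := 2 * ggC j with hB
  have hBpos : 0 < B := by positivity
  set s := (j : ℝ) + α with hs
  have hs0 : 0 < s := by positivity
  set m := s + 1 with hm
  have hm0 : 0 < m := by positivity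
  have hrm : 0 < r ^ m := by positivity
  have hG0 : 0 ≤ G := by
    obtain ⟨y, hy⟩ := nonempty_Ioo.2 hab
    exact (abs_nonneg _).trans (hG y hy)
  set κ := (H / r ^ m) ^ s⁻¹ with hκ
  set D := (G / r ^ m) ^ s⁻¹ with hD
  have hκ0 : 0 ≤ κ := by positivity
  have hD0 : 0 ≤ D := by positivity
  let δ : ℝ → ℝ := fun t => (|d 1 t| / r ^ m) ^ s⁻¹
  set E := {t | t ∈ Ioo a b ∧ r < ggH m d t} with hE
  have hEd : ∀ t ∈ E, d 1 t ≠ 0 ∧ d 0 t ≠ 0 := by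
    intro t ht
    have h1 : 0 < ggH m d t := hr.trans ht.2
    unfold ggH at h1
    constructor
    · intro h; simp [h] at h1
    · intro h
      rw [h, abs_zero, Real.zero_rpow] at h1
      · simp at h1
      · have : m⁻¹ < 1 := inv_lt_one_of_one_lt₀ (by linarith)
        linarith
  have hδ0 : ∀ t ∈ E, 0 < δ t := fun t ht => by
    have := abs_pos.2 (hEd t ht).1
    positivity
  have hδD : ∀ t ∈ E, δ t ≤ D := fun t ht => by
    have := hG t ht.1
    simp only [δ, hD]
    gcongr
  have hδ1 : ∀ t ∈ E, |d 1 t| = r ^ m * δ t ^ s := fun t ht => by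
    simp only [δ]
    rw [Real.rpow_inv_rpow (by positivity) hs0.ne']
    field_simp
  have hδ2 : ∀ t ∈ E, |d 0 t| ≤ (r * δ t) ^ m := fun t ht => by
    have h1 := ht.2
    have hp := abs_pos.2 (hEd t ht).2
    unfold ggH at h1
    have e1 : |d 0 t| ^ (m⁻¹ - 1) = (|d 0 t| ^ (s / m))⁻¹ := by
      rw [← Real.rpow_neg hp.le]; congr 1; field_simp; rw [hm]; ring
    rw [e1, lt_div_iff₀ hm0, ← div_eq_mul_inv, lt_div_iff₀ (by positivity), hδ1 t ht] at h1
    have e2 : r ^ m = r ^ s * r := Real.rpow_add_one hr.ne' s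
    have h2 : |d 0 t| ^ (s / m) ≤ (r * δ t) ^ s := by
      rw [Real.mul_rpow hr.le (hδ0 t ht).le]
      have h3 : 0 ≤ |d 0 t| ^ (s / m) := by positivity
      have h4 : r * |d 0 t| ^ (s / m) ≤ r * (r ^ s * δ t ^ s) := by
        rw [e2] at h1
        nlinarith [mul_nonneg hr.le h3]
      exact le_of_mul_le_mul_left h4 hr
    have h5 := Real.rpow_le_rpow (by positivity) h2 (by positivity : 0 ≤ m / s)
    have hrδ : 0 ≤ r * δ t := by have := hδ0 t ht; positivity
    rw [← Real.rpow_mul hp.le, ← Real.rpow_mul hrδ] at h5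
    have e3 : s / m * (m / s) = 1 := by field_simp
    have e4 : s * (m / s) = m := by field_simp
    rwa [e3, e4, Real.rpow_one] at h5
  set E' := {t | t ∈ E ∧ a < t - B * δ t ∧ t + B * δ t < b} with hE'
  have hV := gg_vitali (2 ^ (j + 1)) (by positivity) a b κ D B hκ0 hBpos hab E' δ
    (fun t ht => ⟨hδ0 t ht.1, hδD t ht.1⟩) (fun t ht => ht.2) (by
      intro c c' t h1 h2 hac hcb i hi
      have hg := gg_group a b α H hH hα j d hd hHol (fun i => t i - B * δ (t i))
        (fun i => t i + B * δ (t i)) c c' hac hcb (fun i hi => ⟨(h1 i hi).2.1, by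
          have := mul_pos hBpos (hδ0 _ (h1 i hi).1.1)
          linarith, (h1 i hi).2.2⟩) h2 (fun i hi => by
          have hi' := (h1 i hi).1
          exact gg_local_zero a b α H r (δ (t i)) (t i) hH hα j d hd hHol hr (hδ0 _ hi'.1) hrH
            (hδ1 _ hi'.1) (hδ2 _ hi'.1) hi'.2.1 hi'.2.2)
      have hi' := h1 i hi
      have p := mul_pos hBpos (hδ0 _ hi'.1.1)
      have h3 := hg (t i) ⟨by linarith [hi'.2.1], by linarith [hi'.2.2]⟩
      have hcc : 0 ≤ c' - c := by linarith [hi'.2.1, hi'.2.2]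
      have h4 : |d 1 (t i)| / r ^ m ≤ H / r ^ m * (c' - c) ^ s := by
        rw [div_mul_eq_mul_div]
        gcongr
      have h5 := Real.rpow_le_rpow (by positivity) h4 (by positivity : 0 ≤ s⁻¹)
      rwa [Real.mul_rpow (by positivity) (by positivity), Real.rpow_rpow_inv hcc hs0.ne'] at h5)
  have hsub : E ⊆ E' ∪ (Icc a (a + B * D) ∪ Icc (b - B * D) b) := by
    intro t ht
    have h1 := mul_le_mul_of_nonneg_left (hδD t ht) hBpos.le
    by_cases h2 : a < t - B * δ t
    · by_cases h3 : t + B * δ t < b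
      · exact Or.inl ⟨ht, h2, h3⟩
      · push Not at h3
        exact Or.inr (Or.inr ⟨by linarith, ht.1.2.le⟩)
    · push Not at h2
      exact Or.inr (Or.inl ⟨ht.1.1.le, by linarith⟩)
  refine (measure_mono hsub).trans ((measure_union_le _ _).trans 
    ((add_le_add hV (measure_union_le _ _)).trans ?_))
  rw [Real.volume_Icc, Real.volume_Icc, max_eq_left hD0]
  have hba : 0 ≤ b - a := by linarith
  rw [← ENNReal.ofReal_add (by nlinarith) (by nlinarith),
    ← ENNReal.ofReal_add (by positivity) (by nlinarith)]
  apply ENNReal.ofReal_le_ofReal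
  have x1 := le_max_left (κ * (b - a)) D
  have x2 := le_max_right (κ * (b - a)) D
  set X := max (κ * (b - a)) D
  push_cast
  have hN : (1 : ℝ) ≤ 2 ^ (j + 1) := one_le_pow₀ (by norm_num)
  have hX : 0 ≤ X := hD0.trans x2
  have y1 : B * D ≤ B * X := by gcongr
  have y2 : B * X * 1 ≤ B * X * 2 ^ (j + 1) := by gcongr
  have y3 : 10 * B * (2 ^ (j + 1) * (κ * (b - a)) + 2 ^ (j + 1) * D) ≤
     10 * B * (2 ^ (j + 1) * X + 2 ^ (j + 1) * X) := by gcongr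
  nlinarith

lemma gg_weak_real (a b α H G r : ℝ) (hab : a < b) (hH : 0 ≤ H) (hα : 0 < α) (j : ℕ) 
    (d : ℕ → ℝ → ℝ)
    (hd : ∀ i < j + 1, ∀ y ∈ Ioo a b, HasDerivAt (d i) (d (i + 1) y) y)
    (hHol : ∀ y ∈ Ioo a b, ∀ z ∈ Ioo a b, |d (j + 1) y - d (j + 1) z| ≤ H * |y - z| ^ α)
    (hG : ∀ y ∈ Ioo a b, |d 1 y| ≤ G)
    (hr : 0 ≤ r) (m q : ℝ) (hm : m = (j : ℝ) + α + 1) (hq : q = ((j : ℝ) + α) / m) :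
    r * (volume {t | t ∈ Ioo a b ∧ r < ggH m d t}).toReal ^ q ≤
      (22 * (2 * ggC j) * 2 ^ (j + 1)) * max (H ^ m⁻¹ * (b - a) ^ q) (G ^ m⁻¹) := by
  have hC := ggC_ge j
  have hba : 0 < b - a := by linarith
  have hs0 : 0 < (j : ℝ) + α := by positivity
  have hm0 : 0 < m := by rw [hm]; positivity
  have hq0 : 0 < q := by rw [hq]; positivity
  have hq1 : q ≤ 1 := by rw [hq, div_le_one hm0, hm]; linarith
  have hG0 : 0 ≤ G := by
    obtain ⟨y, hy⟩ := nonempty_Ioo.2 hab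
    exact (abs_nonneg _).trans (hG y hy)
  have hN : (1 : ℝ) ≤ 2 ^ (j + 1) := one_le_pow₀ (by norm_num)
  set A := 22 * (2 * ggC j) * 2 ^ (j + 1) with hA
  have hAB : 2 * ggC j ≤ A := by rw [hA]; nlinarith
  have hA1 : 1 ≤ A := by linarith
  set E := {t | t ∈ Ioo a b ∧ r < ggH m d t} with hE
  by_cases hrH : (2 * ggC j) ^ m * H < r ^ m
  · have hr0 : 0 < r := by
      rcases hr.lt_or_eq with h | h
      · exact h
      · rw [← h, Real.zero_rpow hm0.ne'] at hrH
        have : 0 ≤ (2 * ggC j) ^ m * H := by positivity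
        linarith
    have hw := gg_weak a b α H G r hab hH hα j d hd hHol hG hr0 (by rw [← hm]; exact hrH)
    rw [← hm, ← hA] at hw
    have hrm : 0 < r ^ m := by positivity
    set κ := (H / r ^ m) ^ ((j : ℝ) + α)⁻¹ with hκ
    set D := (G / r ^ m) ^ ((j : ℝ) + α)⁻¹ with hD
    have hκ0 : 0 ≤ κ := by positivity
    have hD0 : 0 ≤ D := by positivity
    have hX0 : 0 ≤ max (κ * (b - a)) D := hD0.trans (le_max_right _ _)
    have h1 : (volume E).toReal ≤ A * max (κ * (b - a)) D :=
      ENNReal.toReal_le_of_le_ofReal (by positivity) hw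
    have h2 : (volume E).toReal ^ q ≤ A * (max (κ * (b - a)) D) ^ q := by
      refine (Real.rpow_le_rpow ENNReal.toReal_nonneg h1 hq0.le).trans ?_
      rw [Real.mul_rpow (by positivity) hX0]
      gcongr
      calc A ^ q ≤ A ^ (1 : ℝ) := Real.rpow_le_rpow_of_exponent_le hA1 hq1
        _ = A := Real.rpow_one A
    have hpow : ∀ Y : ℝ, 0 ≤ Y → r * ((Y / r ^ m) ^ ((j : ℝ) + α)⁻¹) ^ q = Y ^ m⁻¹ := by
      intro Y hY
      rw [← Real.rpow_mul (by positivity)]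
      have e : ((j : ℝ) + α)⁻¹ * q = m⁻¹ := by rw [hq]; field_simp
      rw [e, Real.div_rpow hY hrm.le, Real.rpow_rpow_inv hr hm0.ne']
      field_simp
    have h3 : r * (max (κ * (b - a)) D) ^ q ≤ max (H ^ m⁻¹ * (b - a) ^ q) (G ^ m⁻¹) := by
      rcases le_total (κ * (b - a)) D with h | h
      · rw [max_eq_right h, hpow G hG0]
        exact le_max_right _ _
      · rw [max_eq_left h, Real.mul_rpow hκ0 hba.le, ← mul_assoc, hpow H hH]
        exact le_max_left _ _
    calc r * (volume E).toReal ^ q ≤ r * (A * (max (κ * (b - a)) D) ^ q) := by gcongr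
      _ = A * (r * (max (κ * (b - a)) D) ^ q) := by ring
      _ ≤ _ := by gcongr
  · push Not at hrH
    have h1 : r ≤ 2 * ggC j * H ^ m⁻¹ := by
      have := Real.rpow_le_rpow (by positivity) hrH (by positivity : 0 ≤ m⁻¹)
      rwa [Real.mul_rpow (by positivity) hH, Real.rpow_rpow_inv hr hm0.ne',
        Real.rpow_rpow_inv (by positivity) hm0.ne'] at this
    have h2 : (volume E).toReal ≤ b - a := by
      apply ENNReal.toReal_le_of_le_ofReal hba.le
      rw [← Real.volume_Ioo]
      exact measure_mono fun t ht => ht.1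
    have h3 : r * (volume E).toReal ^ q ≤ (2 * ggC j * H ^ m⁻¹) * (b - a) ^ q := by
      gcongr
    refine h3.trans ?_
    rw [mul_assoc]
    have h4 : 0 ≤ max (H ^ m⁻¹ * (b - a) ^ q) (G ^ m⁻¹) := le_max_of_le_right (by positivity)
    calc _ ≤ 2 * ggC j * max (H ^ m⁻¹ * (b - a) ^ q) (G ^ m⁻¹) := by
          gcongr; exact le_max_left _ _
      _ ≤ _ := by gcongr

/-- weak `L^p` with `p > 1` on a bounded interval implies integrable. -/
lemma gg_integrable (a b q W : ℝ) (hq0 : 0 < q) (hq1 : q < 1) (h : ℝ → ℝ)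
    (h0 : ∀ t, 0 ≤ h t) (hmeas : AEMeasurable h (volume.restrict (Ioo a b)))
    (hw : ∀ r : ℝ, 0 ≤ r → r * (volume {t | t ∈ Ioo a b ∧ r < h t}).toReal ^ q ≤ W) :
    ∫⁻ t in Ioo a b, ENNReal.ofReal (h t) ≠ ⊤ := by
  have hW : 0 ≤ W := by simpa using hw 0 le_rfl
  rw [lintegral_eq_lintegral_meas_lt _ (Filter.Eventually.of_forall h0) hmeas]
  have hset : ∀ r, (volume.restrict (Ioo a b)) {t | r < h t} = volume {t | t ∈ Ioo a b ∧ r < h t} := by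
    intro r
    rw [Measure.restrict_apply' measurableSet_Ioo, inter_comm]
    rfl
  have hfin : ∀ r, volume {t | t ∈ Ioo a b ∧ r < h t} ≤ ENNReal.ofReal (b - a) := by
    intro r
    rw [← Real.volume_Ioo]
    exact measure_mono fun t ht => ht.1
  simp only [hset]
  have hb : ∀ r ∈ Ioi (1 : ℝ), volume {t | t ∈ Ioo a b ∧ r < h t} ≤ 
      ENNReal.ofReal (W ^ q⁻¹ * r ^ (-q⁻¹)) := by
    intro r hr
    have hr0 : 0 < r := lt_trans one_pos hr
    have h1 := hw r hr0.le
    rw [← ENNReal.ofReal_toReal ((hfin r).trans_lt ENNReal.ofReal_lt_top).ne]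
    apply ENNReal.ofReal_le_ofReal
    have h2 : (volume {t | t ∈ Ioo a b ∧ r < h t}).toReal ^ q ≤ W / r := by
      rw [le_div_iff₀ hr0]; linarith
    have h3 := Real.rpow_le_rpow (by positivity) h2 (by positivity : 0 ≤ q⁻¹)
    rwa [Real.rpow_rpow_inv ENNReal.toReal_nonneg hq0.ne', Real.div_rpow hW hr0.le,
      div_eq_mul_inv, ← Real.rpow_neg hr0.le] at h3
  have hsplit : Ioi (0 : ℝ) ⊆ Ioc 0 1 ∪ Ioi 1 := by
    intro r hr
    rcases le_or_gt r 1 with h | h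
    · exact Or.inl ⟨hr, h⟩
    · exact Or.inr h
  refine ne_top_of_le_ne_top ?_ ((lintegral_mono_set hsplit).trans (lintegral_union_le _ _ _))
  apply ENNReal.add_ne_top.2
  constructor
  · refine ne_top_of_le_ne_top ?_ (lintegral_mono fun r => hfin r)
    simp
  · refine ne_top_of_le_ne_top ?_ (setLIntegral_mono' measurableSet_Ioi hb)
    have : IntegrableOn (fun r : ℝ => W ^ q⁻¹ * r ^ (-q⁻¹)) (Ioi 1) :=
      (integrableOn_Ioi_rpow_of_lt (by
        have := (one_lt_inv₀ hq0).2 hq1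
        linarith) one_pos).const_mul _
    exact this.lintegral_lt_top.ne

lemma gg_deriv (a b m : ℝ) (hm : 1 < m) (d : ℕ → ℝ → ℝ) (f : ℝ → ℝ)
    (hd : ∀ y ∈ Ioo a b, HasDerivAt (d 0) (d 1 y) y) (hf : ContinuousOn f (Ioo a b))
    (hfg : ∀ t ∈ Ioo a b, |f t| ^ m = |d 0 t|) (t : ℝ) (ht : t ∈ Ioo a b) (hft : f t ≠ 0) :
    ∃ f', HasDerivAt f f' t ∧ |f'| = ggH m d t := by
  have hm0 : 0 < m := by linarith
  have hI : Ioo a b ∈ nhds t := Ioo_mem_nhds ht.1 ht.2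
  have hfc : ContinuousAt f t := hf.continuousAt hI
  have habs : ∀ s ∈ Ioo a b, |f s| = |d 0 s| ^ m⁻¹ := fun s hs => by
    rw [← hfg s hs, Real.rpow_rpow_inv (abs_nonneg _) hm0.ne']
  have hg0 : d 0 t ≠ 0 := by
    intro h
    have := habs t ht
    rw [h, abs_zero, Real.zero_rpow (by positivity)] at this
    exact hft (abs_eq_zero.1 this)
  have hF : HasDerivAt (fun s => |d 0 s| ^ m⁻¹) 
      (((SignType.sign (d 0 t) : ℝ) * d 1 t) * m⁻¹ * |d 0 t| ^ (m⁻¹ - 1)) t :=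
    ((hasDerivAt_abs hg0).comp t (hd t ht)).rpow_const (Or.inl (abs_ne_zero.2 hg0))
  have hval : |((SignType.sign (d 0 t) : ℝ) * d 1 t) * m⁻¹ * |d 0 t| ^ (m⁻¹ - 1)| = ggH m d t := by
    have h1 : |(SignType.sign (d 0 t) : ℝ)| = 1 := by
      rcases lt_or_gt_of_ne hg0 with h | h
      · simp [sign_neg h]
      · simp [sign_pos h]
    rw [abs_mul, abs_mul, abs_mul, h1, abs_of_pos (inv_pos.2 hm0), 
      abs_of_nonneg (by positivity : 0 ≤ |d 0 t| ^ (m⁻¹ - 1)), ggH]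
    field_simp
  rcases lt_or_gt_of_ne hft with h | h
  · refine ⟨_, hF.neg.congr_of_eventuallyEq ?_, by rw [abs_neg, hval]⟩
    filter_upwards [hI, hfc.eventually_lt_const h] with s hs hs'
    have := habs s hs
    rw [abs_of_neg hs'] at this
    simp only [Pi.neg_apply]
    linarith
  · refine ⟨_, hF.congr_of_eventuallyEq ?_, hval⟩
    filter_upwards [hI, hfc.eventually_const_lt h] with s hs hs'
    have := habs s hs
    rwa [abs_of_pos hs'] at this

lemma gg_ftc (a b : ℝ) (f h : ℝ → ℝ) (hf : ContinuousOn f (Ioo a b)) (h0 : ∀ t, 0 ≤ h t)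
    (hint : IntegrableOn h (Ioo a b))
    (hder : ∀ t ∈ Ioo a b, f t ≠ 0 → ∃ f', HasDerivAt f f' t ∧ |f'| = h t)
    (u v : ℝ) (huv : u ≤ v) (hsub : Icc u v ⊆ Ioo a b) :
    |f v - f u| ≤ ∫ t in u..v, h t := by
  have basic : ∀ x y, x ≤ y → Icc x y ⊆ Ioo a b → (∀ t ∈ Ioo x y, f t ≠ 0) →
      |f y - f x| ≤ ∫ t in x..y, h t := by
    intro x y hxy hs hne
    have hch : ∀ t, ∃ f', t ∈ Ioo x y → HasDerivAt f f' t ∧ |f'| = h t := by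
      intro t
      by_cases ht : t ∈ Ioo x y
      · obtain ⟨f', h'⟩ := hder t (hs (Ioo_subset_Icc_self ht)) (hne t ht)
        exact ⟨f', fun _ => h'⟩
      · exact ⟨0, fun h => absurd h ht⟩
    choose f' hf' using hch
    rw [abs_le]
    have h1 := intervalIntegral.sub_le_integral_of_hasDeriv_right_of_le (g := f) (g' := f')
      (φ := h) hxy (hf.mono hs) (fun t ht => (hf' t ht).1.hasDerivWithinAt) (hint.mono_set hs)
      (fun t ht => by rw [← (hf' t ht).2]; exact le_abs_self _)
    have h2 := intervalIntegral.sub_le_integral_of_hasDeriv_right_of_le (g := fun t => - f t) 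
      (g' := fun t => - f' t)
      (φ := h) hxy (hf.mono hs).neg (fun t ht => (hf' t ht).1.neg.hasDerivWithinAt) 
      (hint.mono_set hs)
      (fun t ht => by rw [← (hf' t ht).2]; exact neg_le_abs _)
    constructor <;> linarith
  by_cases hz : ∃ z ∈ Icc u v, f z = 0
  swap
  · push Not at hz
    exact basic u v huv hsub fun t ht => hz t (Ioo_subset_Icc_self ht)
  have hcomp : IsCompact (Icc u v ∩ f ⁻¹' {0}) :=
    isCompact_Icc.of_isClosed_subset 
      ((hf.mono hsub).preimage_isClosed_of_isClosed isClosed_Icc isClosed_singleton) 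
      inter_subset_left
  have hne : (Icc u v ∩ f ⁻¹' {0}).Nonempty := by
    obtain ⟨z, hz, hz'⟩ := hz
    exact ⟨z, hz, hz'⟩
  obtain ⟨z1, hz1, hz1'⟩ := hcomp.exists_isLeast hne
  obtain ⟨z2, hz2, hz2'⟩ := hcomp.exists_isGreatest hne
  have h12 : z1 ≤ z2 := hz1' hz2
  have e1 : f z1 = 0 := hz1.2
  have e2 : f z2 = 0 := hz2.2
  have b1 := basic u z1 hz1.1.1 ((Icc_subset_Icc le_rfl hz1.1.2).trans hsub) (fun t ht h => by
    have := hz1' ⟨⟨ht.1.le, ht.2.le.trans hz1.1.2⟩, h⟩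
    linarith [ht.2])
  have b2 := basic z2 v hz2.1.2 ((Icc_subset_Icc hz2.1.1 le_rfl).trans hsub) (fun t ht h => by
    have := hz2' ⟨⟨hz2.1.1.trans ht.1.le, ht.2.le⟩, h⟩
    linarith [ht.1])
  have hii : ∀ x y, x ∈ Icc u v → y ∈ Icc u v → IntervalIntegrable h volume x y := by
    intro x y hx hy
    rw [intervalIntegrable_iff]
    exact hint.mono_set (uIoc_subset_uIcc.trans ((Set.uIcc_subset_Icc hx hy).trans hsub))
  have hu : u ∈ Icc u v := ⟨le_rfl, huv⟩
  have hv : v ∈ Icc u v := ⟨huv, le_rfl⟩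
  have s1 := intervalIntegral.integral_add_adjacent_intervals (hii u z1 hu hz1.1) 
    (hii z1 z2 hz1.1 hz2.1)
  have s2 := intervalIntegral.integral_add_adjacent_intervals (hii u z2 hu hz2.1) 
    (hii z2 v hz2.1 hv)
  have s3 : 0 ≤ ∫ t in z1..z2, h t := intervalIntegral.integral_nonneg h12 fun t _ => h0 t
  have t1 : |f v - f u| ≤ |f v - f z2| + |f z1 - f u| := by
    rw [e1, e2]
    have := abs_sub (f v) (f u)
    simpa using this
  linarith

lemma gg_ac (a b : ℝ) (f h : ℝ → ℝ) (h0 : ∀ t, 0 ≤ h t)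
    (hmeas : AEStronglyMeasurable h (volume.restrict (Ioo a b)))
    (hint : ∫⁻ t in Ioo a b, ENNReal.ofReal (h t) ≠ ⊤)
    (hftc : ∀ u v, u ≤ v → Icc u v ⊆ Ioo a b → |f v - f u| ≤ ∫ t in u..v, h t) :
    AbsContOn f (Ioo a b) := by
  have hintg : IntegrableOn h (Ioo a b) := by
    refine ⟨hmeas, ?_⟩
    rw [hasFiniteIntegral_iff_ofReal (Filter.Eventually.of_forall h0)]
    exact lt_top_iff_ne_top.2 hint
  intro ε hε
  obtain ⟨δ, hδ, hδ'⟩ := exists_pos_setLIntegral_lt_of_measure_lt hint 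
    (ε := ENNReal.ofReal ε) (by simpa using hε)
  obtain ⟨δ', hδ'0, hδ'1⟩ : ∃ x : ℝ, 0 < x ∧ ENNReal.ofReal x ≤ δ := by
    by_cases hT : δ = ⊤
    · exact ⟨1, one_pos, by simp [hT]⟩
    · exact ⟨δ.toReal, ENNReal.toReal_pos hδ.ne' hT, by rw [ENNReal.ofReal_toReal hT]⟩
  refine ⟨δ', hδ'0, fun N u v huv hdis hsum => ?_⟩
  set S := ⋃ i, Ioo (u i) (v i) with hS
  have hSsub : S ⊆ Ioo a b := iUnion_subset fun i => Ioo_subset_Icc_self.trans (huv i).2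
  have hvol : volume S < δ := by
    refine (measure_iUnion_le _).trans_lt ?_
    rw [tsum_fintype]
    simp only [Real.volume_Ioo]
    rw [← ENNReal.ofReal_sum_of_nonneg (fun i _ => sub_nonneg.2 (huv i).1)]
    exact lt_of_lt_of_le ((ENNReal.ofReal_lt_ofReal_iff hδ'0).2 hsum) hδ'1
  have hI := hδ' S ((Measure.restrict_apply_le _ _).trans_lt hvol)
  rw [Measure.restrict_restrict (MeasurableSet.iUnion fun i => measurableSet_Ioo),
    inter_eq_left.2 hSsub] at hI
  have hI2 : ∫ t in S, h t < ε := by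
    rw [integral_eq_lintegral_of_nonneg_ae (Filter.Eventually.of_forall h0)
      (hmeas.mono_measure (Measure.restrict_mono hSsub le_rfl))]
    exact (ENNReal.toReal_lt_of_lt_ofReal hI)
  have hdec : ∫ t in S, h t = ∑ i, ∫ t in Ioo (u i) (v i), h t := by
    rw [hS]
    exact integral_iUnion_fintype (fun i => measurableSet_Ioo) (fun i j hij => hdis i j hij)
      (fun i => hintg.mono_set (Ioo_subset_Icc_self.trans (huv i).2))
  refine lt_of_le_of_lt ?_ hI2
  rw [hdec]
  refine Finset.sum_le_sum fun i _ => ?_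
  have := hftc (u i) (v i) (huv i).1 (huv i).2
  rwa [intervalIntegral.integral_of_le (huv i).1, integral_Ioc_eq_integral_Ioo] at this

lemma gg_countable (f : ℝ → ℝ) : {t | f t = 0 ∧ deriv f t ≠ 0}.Countable := by
  refine (countable_setOfPred_isolated_right_within (s := {t : ℝ | f t = 0})).mono ?_
  rintro t ⟨ht, htd⟩
  refine ⟨ht, ?_⟩
  have hda : HasDerivAt f (deriv f t) t :=
    (differentiableAt_of_deriv_ne_zero htd).hasDerivAt
  have h1 := hda.eventually_ne (c := 0) htd
  rw [← Filter.empty_mem_iff_bot]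
  have h2 : ∀ᶠ z in nhdsWithin t ({t : ℝ | f t = 0} ∩ Ioi t), f z ≠ 0 :=
    h1.filter_mono (nhdsWithin_mono _ fun z hz => (ne_of_gt hz.2))
  filter_upwards [h2, self_mem_nhdsWithin] with z hz hmem
  exact hz hmem.1

/-- **Ghisi–Gobbino.** If `f` is continuous on a bounded open interval `I`
and `|f|^{k+α} = |g|` for some `g ∈ C^{k,α}(Ī)`, then `f` is absolutely continuous and its
a.e. derivative lies in weak-`L^p`, `1/p + 1/(k+α) = 1`, with
`‖f'‖_{p,w,I} ≤ C(k) max{Höld_{α,I}(g^{(k)})^{1/(k+α)} |I|^{1/p}, ‖g'‖_∞^{1/(k+α)}}`. -/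
theorem ghisi_gobbino (k : ℕ) (hk : 1 ≤ k) :
    ∃ C : ℝ, 0 < C ∧
      ∀ (αe : ℝ), 0 < αe → αe ≤ 1 →
      ∀ (a b : ℝ), a < b →
      ∀ (p : ℝ), 1 / p + 1 / ((k : ℝ) + αe) = 1 →
      ∀ d : ℕ → ℝ → ℝ,
      DerivChain d k (Icc a b) →
      ContinuousOn (d k) (Icc a b) →
      (∃ H : ℝ, ∀ x ∈ Ioo a b, ∀ y ∈ Ioo a b, |d k x - d k y| ≤ H * |x - y| ^ αe) →
      ∀ f : ℝ → ℝ, ContinuousOn f (Ioo a b) →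
      (∀ t ∈ Ioo a b, |f t| ^ ((k : ℝ) + αe) = |d 0 t|) →
      AbsContOn f (Ioo a b) ∧
      ∀ r : ℝ, 0 ≤ r →
        r * (volume {t | t ∈ Ioo a b ∧ r < |deriv f t|}).toReal ^ (1 / p) ≤
          C * max ((HolderConst αe (Ioo a b) (d k)) ^ (((k : ℝ) + αe)⁻¹) * (b - a) ^ (1 / p))
                  ((sSup ((fun x => |d 1 x|) '' Ioo a b)) ^ (((k : ℝ) + αe)⁻¹)) := by
  obtain ⟨j, rfl⟩ : ∃ j, k = j + 1 := ⟨k - 1, by omega⟩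
  have hC := ggC_ge j
  refine ⟨22 * (2 * ggC j) * 2 ^ (j + 1), by positivity, ?_⟩
  intro α hα hα1 a b hab p hp d hchain hcont hHex f hf hfg
  have hd : ∀ i < j + 1, ∀ y ∈ Ioo a b, HasDerivAt (d i) (d (i + 1) y) y := fun i hi y hy =>
    (hchain i hi y (Ioo_subset_Icc_self hy)).hasDerivAt (Icc_mem_nhds hy.1 hy.2)
  set m : ℝ := ((j + 1 : ℕ) : ℝ) + α with hm
  have hm' : m = (j : ℝ) + α + 1 := by rw [hm]; push_cast; ring
  have hs0 : 0 < (j : ℝ) + α := by positivity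
  have hm1 : 1 < m := by linarith
  have hm0 : 0 < m := by linarith
  have hq : 1 / p = ((j : ℝ) + α) / m := by
    have : 1 / p = 1 - 1 / m := by linarith
    rw [this, eq_div_iff hm0.ne', sub_mul, one_div_mul_cancel hm0.ne', hm']; ring
  have hq0 : 0 < 1 / p := by rw [hq]; positivity
  have hq1 : 1 / p < 1 := by
    have : 0 < 1 / m := by positivity
    linarith
  generalize 1 / p = q at hq hq0 hq1 
  set H := HolderConst α (Ioo a b) (d (j + 1)) with hHdef
  set G := sSup ((fun x => |d 1 x|) '' Ioo a b) with hGdef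
  have hH0 : 0 ≤ H := by
    apply Real.sSup_nonneg
    rintro _ ⟨x, _, y, _, _, rfl⟩
    positivity
  have hHol : ∀ y ∈ Ioo a b, ∀ z ∈ Ioo a b,
      |d (j + 1) y - d (j + 1) z| ≤ H * |y - z| ^ α := by
    intro y hy z hz
    by_cases hyz : y = z
    · subst hyz; simp [Real.zero_rpow hα.ne']
    have hpos : 0 < |y - z| ^ α := Real.rpow_pos_of_pos (abs_pos.2 (sub_ne_zero.2 hyz)) _
    rw [← div_le_iff₀ hpos]
    obtain ⟨H', hH'⟩ := hHex
    refine le_csSup ⟨H', ?_⟩ ⟨y, hy, z, hz, hyz, rfl⟩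
    rintro _ ⟨x, hx, w, hw, hxw, rfl⟩
    have hpos : 0 < |x - w| ^ α := Real.rpow_pos_of_pos (abs_pos.2 (sub_ne_zero.2 hxw)) _
    rw [div_le_iff₀ hpos]
    exact hH' x hx w hw
  have hc1 : ContinuousOn (d 1) (Icc a b) := by
    rcases Nat.eq_zero_or_pos j with rfl | hj
    · exact hcont
    · exact fun x hx => (hchain 1 (by omega) x hx).continuousWithinAt
  have hG : ∀ y ∈ Ioo a b, |d 1 y| ≤ G := by
    intro y hy
    refine le_csSup ?_ ⟨y, hy, rfl⟩
    exact (isCompact_Icc.bddAbove_image hc1.abs).mono (image_mono Ioo_subset_Icc_self)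
  have hweak := fun (r : ℝ) (hr : 0 ≤ r) =>
    gg_weak_real a b α H G r hab hH0 hα j d hd hHol hG hr m q hm' hq
  have hh0 : ∀ t, 0 ≤ ggH m d t := fun t => by unfold ggH; positivity
  have hc0 : ContinuousOn (d 0) (Icc a b) :=
    fun x hx => (hchain 0 (by omega) x hx).continuousWithinAt
  have hmeas : AEMeasurable (ggH m d) (volume.restrict (Ioo a b)) := by
    have m0 : AEMeasurable (fun t => |d 0 t|) (volume.restrict (Ioo a b)) :=
      (hc0.mono Ioo_subset_Icc_self).abs.aemeasurable measurableSet_Ioo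
    have m1 : AEMeasurable (fun t => |d 1 t|) (volume.restrict (Ioo a b)) :=
      (hc1.mono Ioo_subset_Icc_self).abs.aemeasurable measurableSet_Ioo
    exact (m1.mul (m0.pow_const _)).div_const _
  have hint := gg_integrable a b q _ hq0 hq1 (ggH m d) hh0 hmeas hweak
  have hder := gg_deriv a b m hm1 d f (hd 0 (by omega)) hf hfg
  refine ⟨?_, ?_⟩
  · refine gg_ac a b f (ggH m d) hh0 hmeas.aestronglyMeasurable hint
      (gg_ftc a b f (ggH m d) hf hh0 ⟨hmeas.aestronglyMeasurable, ?_⟩ hder)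
    rw [hasFiniteIntegral_iff_ofReal (Filter.Eventually.of_forall hh0)]
    exact lt_top_iff_ne_top.2 hint
  · intro r hr
    refine le_trans ?_ (hweak r hr)
    have hfin : volume {t | t ∈ Ioo a b ∧ r < ggH m d t} ≠ ⊤ :=
      ne_top_of_le_ne_top (by rw [Real.volume_Ioo]; exact ENNReal.ofReal_ne_top)
        (measure_mono (t := Ioo a b) fun t ht => ht.1)
    have hle : volume {t | t ∈ Ioo a b ∧ r < |deriv f t|} ≤
        volume {t | t ∈ Ioo a b ∧ r < ggH m d t} := by
      have hsub : {t | t ∈ Ioo a b ∧ r < |deriv f t|} ⊆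
          {t | t ∈ Ioo a b ∧ r < ggH m d t} ∪ {t | f t = 0 ∧ deriv f t ≠ 0} := by
        rintro t ⟨ht, htr⟩
        by_cases hft : f t = 0
        · right
          refine ⟨hft, fun h => ?_⟩
          rw [h, abs_zero] at htr
          linarith
        · left
          obtain ⟨f', h1, h2⟩ := hder t ht hft
          rw [h1.deriv, h2] at htr
          exact ⟨ht, htr⟩
      refine (measure_mono hsub).trans ((measure_union_le _ _).trans ?_)
      rw [(gg_countable f).measure_zero, add_zero]
    gcongr
end
end

section
/- Let I ⊆ ℝ be a bounded interval, let k be a positive integer, and let α ∈ (0,1]. For each g ∈ C^{k,α}(Ī, ℂ) there exists a measurable function Λ : I → [0,∞) such that |g'(t)| ≤ Λ(t) · |g(t)|^{1−1/(k+α)} for almost every t ∈ I, Λ belongs to the weak Lebesgue space L^p_w(I) where p = (k+α)/(k+α−1), and ‖Λ‖_{p,w,I} ≤ C(k) · max{ (Höld_{α,I}(g^{(k)}))^{1/(k+α)} |I|^{1/p}, ‖g'‖_{L^∞(I)}^{1/(k+α)} }, with a constant C(k) depending only on k. -/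
open Set MeasureTheory Real

noncomputable section

lemma aux_injOn {f f' : ℝ → ℝ} {x y : ℝ}
    (hf : ∀ t ∈ Icc x y, HasDerivWithinAt f (f' t) (Icc x y) t)
    (hne : ∀ t ∈ Ioo x y, f' t ≠ 0) : InjOn f (Ioo x y) := by
  have key : ∀ u ∈ Ioo x y, ∀ v ∈ Ioo x y, u < v → f u ≠ f v := by
    intro u hu v hv huv h
    have hc : ContinuousOn f (Icc x y) := fun t ht => (hf t ht).continuousWithinAt
    obtain ⟨c, hc, hc0⟩ := exists_hasDerivAt_eq_zero (f := f) (f' := f') huv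
      (hc.mono (Icc_subset_Icc hu.1.le hv.2.le)) h (fun t ht =>
        (hf t ⟨(hu.1.trans ht.1).le, (ht.2.trans hv.2).le⟩).hasDerivAt
          (Icc_mem_nhds (hu.1.trans ht.1) (ht.2.trans hv.2)))
    exact hne c ⟨hu.1.trans hc.1, hc.2.trans hv.2⟩ hc0
  intro u hu v hv h
  rcases lt_trichotomy u v with h1 | h1 | h1
  · exact absurd h (key u hu v hv h1)
  · exact h1
  · exact absurd h.symm (key v hv u hu h1)

lemma aux_half {f f' : ℝ → ℝ} {x y A s r : ℝ} (hs : 1 < s) (hr : 0 < r)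
    (hf : ∀ t ∈ Icc x y, HasDerivWithinAt f (f' t) (Icc x y) t)
    (hfc : ContinuousOn f' (Icc x y))
    (hne : ∀ t ∈ Ioo x y, f' t ≠ 0)
    (hA : ∀ t ∈ Icc x y, |f' t| ≤ A) :
    volume {t | t ∈ Ioo x y ∧ 0 < f t ∧ r * (f t) ^ (1 - s⁻¹) < |f' t|} ≤
      ENNReal.ofReal (s / r * (A / r) ^ (1 / (s - 1))) := by
  set S := {t | t ∈ Ioo x y ∧ 0 < f t ∧ r * (f t) ^ (1 - s⁻¹) < |f' t|} with hS
  have hs0 : 0 < s := by linarith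
  have hsi : s⁻¹ < 1 := inv_lt_one_of_one_lt₀ hs
  have hfcont : ContinuousOn f (Icc x y) := fun t ht => (hf t ht).continuousWithinAt
  have hf0 : ContinuousOn f (Ioo x y) := hfcont.mono Ioo_subset_Icc_self
  have hf1 : ContinuousOn f' (Ioo x y) := hfc.mono Ioo_subset_Icc_self
  have hSo : IsOpen S := by
    have h1 : IsOpen (Ioo x y ∩ f ⁻¹' Ioi 0) := hf0.isOpen_inter_preimage isOpen_Ioo isOpen_Ioi
    have h2 : ContinuousOn (fun t => |f' t| - r * (f t) ^ (1 - s⁻¹)) (Ioo x y) :=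
      hf1.abs.sub (continuousOn_const.mul (hf0.rpow_const (fun t _ => Or.inr (by linarith))))
    have h3 := h2.isOpen_inter_preimage isOpen_Ioo (isOpen_Ioi (a := (0:ℝ)))
    have : S = (Ioo x y ∩ f ⁻¹' Ioi 0) ∩
        (Ioo x y ∩ (fun t => |f' t| - r * (f t) ^ (1 - s⁻¹)) ⁻¹' Ioi 0) := by
      ext t; simp only [hS, mem_ofPred_eq, mem_inter_iff, mem_preimage, mem_Ioi, sub_pos]; tauto
    rw [this]; exact h1.inter h3
  have hder : ∀ t ∈ S, HasDerivWithinAt (fun t => (f t) ^ s⁻¹)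
      (f' t * s⁻¹ * (f t) ^ (s⁻¹ - 1)) S t := by
    intro t ht
    have h1 : HasDerivAt f (f' t) t := (hf t (Ioo_subset_Icc_self ht.1)).hasDerivAt
          (Icc_mem_nhds ht.1.1 ht.1.2)
    exact (h1.rpow_const (Or.inl ht.2.1.ne')).hasDerivWithinAt
  have hinj : InjOn (fun t => (f t) ^ s⁻¹) S := by
    intro u hu v hv h
    apply aux_injOn hf hne hu.1 hv.1
    exact (Real.rpow_left_inj hu.2.1.le hv.2.1.le (by positivity)).1 h
  have hcv := lintegral_image_eq_lintegral_abs_deriv_mul hSo.measurableSet hder hinj (fun _ => 1)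
  simp only [mul_one, lintegral_one, Measure.restrict_apply_univ] at hcv
  set m := (A / r) ^ (1 / (s - 1)) with hm
  have himg : (fun t => (f t) ^ s⁻¹) '' S ⊆ Icc 0 m := by
    rintro _ ⟨t, ht, rfl⟩
    have hp := ht.2.1
    refine ⟨by positivity, ?_⟩
    have h1 : (f t) ^ (1 - s⁻¹) ≤ A / r := by
      rw [le_div_iff₀ hr, mul_comm]
      exact ht.2.2.le.trans (hA t (Ioo_subset_Icc_self ht.1))
    have h2 := Real.rpow_le_rpow (by positivity) h1 (show 0 ≤ 1 / (s - 1) by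
      apply div_nonneg <;> linarith)
    rw [← Real.rpow_mul hp.le] at h2
    have h3 : (1 - s⁻¹) * (1 / (s - 1)) = s⁻¹ := by
      have : s - 1 ≠ 0 := by linarith
      field_simp
    rwa [h3] at h2
  have hv1 : volume ((fun t => (f t) ^ s⁻¹) '' S) ≤ ENNReal.ofReal m := by
    refine (measure_mono himg).trans ?_
    simp
  have hlow : ENNReal.ofReal (r / s) * volume S ≤
      ∫⁻ t in S, ENNReal.ofReal |f' t * s⁻¹ * (f t) ^ (s⁻¹ - 1)| := by
    rw [← setLIntegral_const]
    refine setLIntegral_mono' hSo.measurableSet ?_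
    intro t ht
    apply ENNReal.ofReal_le_ofReal
    have hp := ht.2.1
    rw [abs_mul, abs_mul, abs_of_pos (Real.rpow_pos_of_pos hp _), abs_of_pos (inv_pos.2 hs0)]
    have h1 := ht.2.2.le
    have h2 : (f t) ^ (1 - s⁻¹) * (f t) ^ (s⁻¹ - 1) = 1 := by
      rw [← Real.rpow_add hp]; simp
    calc r / s = (r * (f t) ^ (1 - s⁻¹)) * s⁻¹ * (f t) ^ (s⁻¹ - 1) := by
          rw [div_eq_mul_inv]; linear_combination (- r * s⁻¹) * h2
      _ ≤ _ := by gcongr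
  rw [← hcv] at hlow
  have h := hlow.trans hv1
  have hrs : 0 < r / s := by positivity
  have : volume S ≤ ENNReal.ofReal m / ENNReal.ofReal (r / s) := by
    rw [ENNReal.le_div_iff_mul_le (Or.inl (by simpa using hrs)) (Or.inl ENNReal.ofReal_ne_top),
      mul_comm]
    exact h
  refine this.trans (le_of_eq ?_)
  rw [← ENNReal.ofReal_div_of_pos hrs]
  congr 1
  field_simp

/-- The exceptional set. -/
def glE (f f' : ℝ → ℝ) (s r : ℝ) : Set ℝ := {t | r * |f t| ^ (1 - s⁻¹) < |f' t|}

lemma aux_base {f f' : ℝ → ℝ} {x y A s r : ℝ} (hs : 1 < s) (hr : 0 < r) (hA0 : 0 ≤ A)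
    (hf : ∀ t ∈ Icc x y, HasDerivWithinAt f (f' t) (Icc x y) t)
    (hfc : ContinuousOn f' (Icc x y))
    (hne : ∀ t ∈ Ioo x y, f' t ≠ 0)
    (hA : ∀ t ∈ Icc x y, |f' t| ≤ A) :
    volume (glE f f' s r ∩ Icc x y) ≤
      ENNReal.ofReal (2 * (s / r) * (A / r) ^ (1 / (s - 1))) := by
  have h1 := aux_half hs hr hf hfc hne hA
  have h2 := aux_half (f := fun t => - f t) (f' := fun t => - f' t) (A := A) hs hr
    (fun t ht => (hf t ht).neg) hfc.neg (fun t ht => neg_ne_zero.2 (hne t ht))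
    (fun t ht => by rw [abs_neg]; exact hA t ht)
  have h3 : volume ({x, y} : Set ℝ) = 0 := (Set.toFinite _).measure_zero _
  have h4 : volume (Ioo x y ∩ {t | f t = 0}) = 0 := by
    apply Set.Subsingleton.measure_zero
    intro u hu v hv
    exact aux_injOn hf hne hu.1 hv.1 (hu.2.trans hv.2.symm)
  have hsub : glE f f' s r ∩ Icc x y ⊆
      (({t | t ∈ Ioo x y ∧ 0 < f t ∧ r * (f t) ^ (1 - s⁻¹) < |f' t|} ∪
       {t | t ∈ Ioo x y ∧ 0 < - f t ∧ r * (- f t) ^ (1 - s⁻¹) < |- f' t|}) ∪ {x, y}) ∪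
       (Ioo x y ∩ {t | f t = 0}) := by
    rintro t ⟨ht, htx, hty⟩
    rcases htx.eq_or_lt with h | htx
    · left; right; left; exact h.symm
    rcases hty.eq_or_lt with h | hty
    · left; right; right; exact h
    have ht' : r * |f t| ^ (1 - s⁻¹) < |f' t| := ht
    rcases lt_trichotomy (f t) 0 with h | h | h
    · left; left; right
      refine ⟨⟨htx, hty⟩, by linarith, ?_⟩
      rwa [abs_of_neg h, ← abs_neg (f' t)] at ht'
    · right; exact ⟨⟨htx, hty⟩, h⟩
    · left; left; left
      refine ⟨⟨htx, hty⟩, h, ?_⟩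
      rwa [abs_of_pos h] at ht'
  refine (measure_mono hsub).trans ?_
  refine (measure_union_le _ _).trans ?_
  rw [h4, add_zero]
  refine (measure_union_le _ _).trans ?_
  rw [h3, add_zero]
  refine (measure_union_le _ _).trans ((add_le_add h1 h2).trans (le_of_eq ?_))
  have : 0 ≤ s / r * (A / r) ^ (1 / (s - 1)) := by
    have : 0 < s := by linarith
    positivity
  rw [← ENNReal.ofReal_add this this]
  congr 1; ring

lemma aux_finset {f f' : ℝ → ℝ} {A s r : ℝ} (hs : 1 < s) (hr : 0 < r) (hA0 : 0 ≤ A)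
    (T : Finset ℝ) : ∀ (x y : ℝ)
    (_ : ∀ t ∈ Icc x y, HasDerivWithinAt f (f' t) (Icc x y) t)
    (_ : ContinuousOn f' (Icc x y))
    (_ : ∀ t ∈ Ioo x y, f' t = 0 → t ∈ T)
    (_ : ∀ t ∈ Icc x y, |f' t| ≤ A),
    volume (glE f f' s r ∩ Icc x y) ≤
      (T.card + 1) * ENNReal.ofReal (2 * (s / r) * (A / r) ^ (1 / (s - 1))) := by
  induction T using Finset.induction_on_max with
  | empty =>
    intro x y hf hfc hne hA
    simpa using aux_base hs hr hA0 hf hfc (fun t ht h => by simpa using hne t ht h) hA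
  | insert z T hz ih =>
    intro x y hf hfc hne hA
    have hzT : z ∉ T := fun h => (hz z h).false
    rw [Finset.card_insert_of_notMem hzT]
    by_cases hzm : z ∈ Ioo x y
    · have s1 : Icc x z ⊆ Icc x y := Icc_subset_Icc le_rfl hzm.2.le
      have s2 : Icc z y ⊆ Icc x y := Icc_subset_Icc hzm.1.le le_rfl
      have e1 := ih x z (fun t ht => (hf t (s1 ht)).mono s1) (hfc.mono s1)
        (fun t ht h => by
          have := hne t ⟨ht.1, ht.2.trans hzm.2⟩ h
          rcases Finset.mem_insert.1 this with h | h
          · exact absurd h ht.2.ne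
          · exact h) (fun t ht => hA t (s1 ht))
      have e2 := aux_base (A := A) hs hr hA0 (fun t ht => (hf t (s2 ht)).mono s2) (hfc.mono s2)
        (fun t ht h => by
          have := hne t ⟨hzm.1.trans ht.1, ht.2⟩ h
          rcases Finset.mem_insert.1 this with h | h
          · exact absurd h ht.1.ne'
          · exact absurd ht.1 (hz t h).not_gt) (fun t ht => hA t (s2 ht))
      rw [← Icc_union_Icc_eq_Icc hzm.1.le hzm.2.le, inter_union_distrib_left]
      refine (measure_union_le _ _).trans ((add_le_add e1 e2).trans (le_of_eq ?_))
      push_cast; ring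
    · refine (ih x y hf hfc (fun t ht h => ?_) hA).trans ?_
      · rcases Finset.mem_insert.1 (hne t ht h) with h | h
        · exact absurd (h ▸ ht) hzm
        · exact h
      · gcongr; simp

/-- `h` has at least `n` distinct zeros in `[x, y]`. -/
def glZn (h : ℝ → ℝ) (x y : ℝ) (n : ℕ) : Prop :=
  ∃ z : ℕ → ℝ, (∀ i < n, z i ∈ Icc x y ∧ h (z i) = 0) ∧ ∀ i j, i < j → j < n → z i < z j

lemma glZn_of_encard {h : ℝ → ℝ} {x y : ℝ} {n : ℕ}
    (hn : (n : ℕ∞) ≤ {t | t ∈ Icc x y ∧ h t = 0}.encard) : glZn h x y n := by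
  obtain ⟨T, hT, hc⟩ := Set.exists_subset_encard_eq hn
  have hfin : T.Finite := Set.finite_of_encard_eq_coe hc
  have hcard : hfin.toFinset.card = n := by
    rw [hfin.encard_eq_coe_toFinset_card] at hc
    exact_mod_cast hc
  refine ⟨fun i => if hi : i < n then hfin.toFinset.orderEmbOfFin hcard ⟨i, hi⟩ else 0, ?_, ?_⟩
  · intro i hi
    simp only [hi, dif_pos]
    have := hfin.toFinset.orderEmbOfFin_mem hcard ⟨i, hi⟩
    exact hT (hfin.mem_toFinset.1 this)
  · intro i j hij hj
    simp only [hj, hij.trans hj, dif_pos]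
    exact (hfin.toFinset.orderEmbOfFin hcard).strictMono hij

lemma glZn_rolle {h h' : ℝ → ℝ} {x y : ℝ} {n : ℕ}
    (hf : ∀ t ∈ Icc x y, HasDerivWithinAt h (h' t) (Icc x y) t)
    (hz : glZn h x y (n + 1)) : glZn h' x y n := by
  obtain ⟨z, hz, hlt⟩ := hz
  have hc : ContinuousOn h (Icc x y) := fun t ht => (hf t ht).continuousWithinAt
  have key : ∀ i, ∃ c, i < n → c ∈ Ioo (z i) (z (i + 1)) ∧ h' c = 0 := by
    intro i
    by_cases hi : i < n
    · have h1 := hz i (by omega)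
      have h2 := hz (i + 1) (by omega)
      obtain ⟨c, hc, hc0⟩ := exists_hasDerivAt_eq_zero (f := h) (f' := h')
        (hlt i (i + 1) (by omega) (by omega))
        (hc.mono (Icc_subset_Icc h1.1.1 h2.1.2)) (h1.2.trans h2.2.symm) (fun t ht =>
        (hf t ⟨(h1.1.1.trans ht.1.le), (ht.2.le.trans h2.1.2)⟩).hasDerivAt
          (Icc_mem_nhds (h1.1.1.trans_lt ht.1) (ht.2.trans_le h2.1.2)))
      exact ⟨c, fun _ => ⟨hc, hc0⟩⟩
    · exact ⟨0, fun h => absurd h hi⟩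
  choose c hc using key
  refine ⟨c, ?_, ?_⟩
  · intro i hi
    have h1 := hz i (by omega)
    have h2 := hz (i + 1) (by omega)
    have h3 := hc i hi
    exact ⟨⟨h1.1.1.trans h3.1.1.le, h3.1.2.le.trans h2.1.2⟩, h3.2⟩
  · intro i j hij hj
    have h1 := hc i (hij.trans hj)
    have h2 := hc j hj
    refine h1.1.2.trans (lt_of_le_of_lt ?_ h2.1.1)
    rcases (Nat.succ_le_of_lt hij).eq_or_lt with h | h
    · exact le_of_eq (congrArg z h)
    · exact (hlt _ _ h (by omega)).le

lemma aux_zeros {d : ℕ → ℝ → ℝ} {k : ℕ} {x y : ℝ} (hd : DerivChain d k (Icc x y))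
    (hz : glZn (d 1) x y k) (j : ℕ) (hj : j < k) : glZn (d (j + 1)) x y (k - j) := by
  induction j with
  | zero => simpa using hz
  | succ j ih =>
    have h1 := ih (by omega)
    have h2 : k - j = (k - (j + 1)) + 1 := by omega
    rw [h2] at h1
    exact glZn_rolle (fun t ht => hd (j + 1) hj t ht) h1

lemma aux_zero {d : ℕ → ℝ → ℝ} {k : ℕ} {x y : ℝ} (hd : DerivChain d k (Icc x y))
    (hz : glZn (d 1) x y k) (j : ℕ) (hj : 1 ≤ j) (hjk : j ≤ k) :
    ∃ z ∈ Icc x y, d j z = 0 := by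
  obtain ⟨z, hz, _⟩ := aux_zeros hd hz (j - 1) (by omega)
  have := hz 0 (by omega)
  rw [show j - 1 + 1 = j by omega] at this
  exact ⟨_, this⟩

lemma aux_bound {d : ℕ → ℝ → ℝ} {k : ℕ} {x y H α : ℝ} (hxy : x < y) (hH : 0 ≤ H) (hα : 0 < α)
    (hd : DerivChain d k (Icc x y))
    (hh : ∀ u ∈ Icc x y, ∀ v ∈ Icc x y, |d k u - d k v| ≤ H * |u - v| ^ α)
    (hz : glZn (d 1) x y k) (j : ℕ) (hj : j < k) :
    ∀ t ∈ Icc x y, |d (k - j) t| ≤ H * (y - x) ^ ((j : ℝ) + α) := by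
  have hdist : ∀ u ∈ Icc x y, ∀ v ∈ Icc x y, |u - v| ≤ y - x := by
    intro u hu v hv
    rw [abs_le]; constructor <;> linarith [hu.1, hu.2, hv.1, hv.2]
  induction j with
  | zero =>
    intro t ht
    obtain ⟨z, hzm, hz0⟩ := aux_zero hd hz k (by omega) le_rfl
    have h1 := hh t ht z hzm
    rw [hz0, sub_zero] at h1
    simp only [Nat.sub_zero, Nat.cast_zero, zero_add]
    refine h1.trans ?_
    gcongr
    exact hdist t ht z hzm
  | succ j ih =>
    intro t ht
    have ih := ih (by omega)
    obtain ⟨z, hzm, hz0⟩ := aux_zero hd hz (k - (j + 1)) (by omega) (by omega)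
    have h1 := (convex_Icc x y).norm_image_sub_le_of_norm_hasDerivWithin_le
      (f := d (k - (j + 1))) (f' := d (k - j)) (C := H * (y - x) ^ ((j : ℝ) + α))
      (fun u hu => by
        have := hd (k - (j + 1)) (by omega) u hu
        rwa [show k - (j + 1) + 1 = k - j by omega] at this)
      (fun u hu => ih u hu) hzm ht
    rw [hz0, sub_zero, Real.norm_eq_abs, Real.norm_eq_abs] at h1
    refine h1.trans ?_
    have hL : 0 < y - x := by linarith
    have h2 : (y - x) ^ (((j + 1 : ℕ) : ℝ) + α) = (y - x) ^ ((j : ℝ) + α) * (y - x) := by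
      rw [← Real.rpow_add_one hL.ne']; congr 1; push_cast; ring
    rw [h2, ← mul_assoc]
    gcongr
    exact hdist t ht z hzm

lemma aux_few {f f' : ℝ → ℝ} {A s r x y : ℝ} {k : ℕ} (hs : 1 < s) (hr : 0 < r) (hA0 : 0 ≤ A)
    (hf : ∀ t ∈ Icc x y, HasDerivWithinAt f (f' t) (Icc x y) t)
    (hfc : ContinuousOn f' (Icc x y))
    (hn : ¬ (k : ℕ∞) ≤ {t | t ∈ Icc x y ∧ f' t = 0}.encard)
    (hA : ∀ t ∈ Icc x y, |f' t| ≤ A) :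
    volume (glE f f' s r ∩ Icc x y) ≤
      ENNReal.ofReal (k * (2 * (s / r) * (A / r) ^ (1 / (s - 1)))) := by
  rw [not_le] at hn
  have hfin : {t | t ∈ Icc x y ∧ f' t = 0}.Finite :=
    Set.finite_of_encard_le_coe hn.le
  have hcard : hfin.toFinset.card + 1 ≤ k := by
    rw [hfin.encard_eq_coe_toFinset_card] at hn
    exact_mod_cast hn
  refine (aux_finset hs hr hA0 hfin.toFinset x y hf hfc (fun t ht h => ?_) hA).trans ?_
  · rw [hfin.mem_toFinset]; exact ⟨Ioo_subset_Icc_self ht, h⟩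
  · rw [ENNReal.ofReal_mul (p := (k : ℝ)) (by positivity), ENNReal.ofReal_natCast]
    gcongr
    exact_mod_cast hcard

lemma aux_bisect {d : ℕ → ℝ → ℝ} {k : ℕ} {a b H α s r ε : ℝ} (hk : 1 ≤ k)
    (hH : 0 ≤ H) (hα : 0 < α) (hr : 0 < r) (hs : s = k + α)
    (hd : DerivChain d k (Icc a b)) (hc1 : ContinuousOn (d 1) (Icc a b))
    (hh : ∀ u ∈ Icc a b, ∀ v ∈ Icc a b, |d k u - d k v| ≤ H * |u - v| ^ α) (n : ℕ) :
    ∀ x y : ℝ, x < y → Icc x y ⊆ Icc a b →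
      (k : ℕ∞) ≤ {t | t ∈ Icc x y ∧ d 1 t = 0}.encard →
      H * ((y - x) / 2 ^ n) ^ (s - 1) < ε →
      volume ((glE (d 0) (d 1) s r ∩ {t | ε ≤ |d 1 t|}) ∩ Icc x y) ≤
        ENNReal.ofReal (k * (4 * (s / r)) * (H / r) ^ (1 / (s - 1)) * (y - x)) := by
  have hk' : (1 : ℝ) ≤ k := by exact_mod_cast hk
  have hs1 : 1 < s := by linarith
  have hbd : ∀ x y : ℝ, x < y → Icc x y ⊆ Icc a b →
      (k : ℕ∞) ≤ {t | t ∈ Icc x y ∧ d 1 t = 0}.encard →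
      ∀ t ∈ Icc x y, |d 1 t| ≤ H * (y - x) ^ (s - 1) := by
    intro x y hxy hsub hn t ht
    have := aux_bound hxy hH hα (fun i hi u hu => (hd i hi u (hsub hu)).mono hsub)
      (fun u hu v hv => hh u (hsub hu) v (hsub hv)) (glZn_of_encard hn) (k - 1) (by omega) t ht
    rw [show k - (k - 1) = 1 by omega] at this
    convert this using 3
    rw [hs]; push_cast [hk]; ring
  induction n with
  | zero =>
    intro x y hxy hsub hn hε
    have : (glE (d 0) (d 1) s r ∩ {t | ε ≤ |d 1 t|}) ∩ Icc x y = ∅ := by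
      ext t
      simp only [mem_inter_iff, mem_ofPred_eq, mem_empty_iff_false, iff_false]
      rintro ⟨⟨_, h1⟩, h2⟩
      have := hbd x y hxy hsub hn t h2
      rw [pow_zero, div_one] at hε
      linarith
    rw [this]; simp
  | succ n ih =>
    intro x y hxy hsub hn hε
    have hL : 0 < y - x := by linarith
    have hhalf : ∀ u v : ℝ, v - u = (y - x) / 2 → Icc u v ⊆ Icc x y →
        volume ((glE (d 0) (d 1) s r ∩ {t | ε ≤ |d 1 t|}) ∩ Icc u v) ≤
        ENNReal.ofReal (k * (4 * (s / r)) * (H / r) ^ (1 / (s - 1)) * ((y - x) / 2)) := by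
      intro u v huv hs2
      by_cases hn2 : (k : ℕ∞) ≤ {t | t ∈ Icc u v ∧ d 1 t = 0}.encard
      · rw [← huv]
        refine ih u v (by linarith) (hs2.trans hsub) hn2 ?_
        rw [huv]
        convert hε using 3
        rw [pow_succ]; field_simp
      · have hs3 := hs2.trans hsub
        have := aux_few (f := d 0) (f' := d 1) (A := H * (y - x) ^ (s - 1)) hs1 hr (by positivity)
          (fun t ht => (hd 0 (by omega) t (hs3 ht)).mono hs3) (hc1.mono hs3) hn2
          (fun t ht => hbd x y hxy hsub hn t (hs2 ht))
        refine (measure_mono (inter_subset_inter_left _ inter_subset_left)).trans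
          (this.trans (le_of_eq ?_))
        congr 1
        have e : (H * (y - x) ^ (s - 1) / r) ^ (1 / (s - 1)) =
            (H / r) ^ (1 / (s - 1)) * (y - x) := by
          rw [show H * (y - x) ^ (s - 1) / r = (H / r) * (y - x) ^ (s - 1) by ring,
            Real.mul_rpow (by positivity) (by positivity), ← Real.rpow_mul hL.le,
            mul_one_div_cancel (by linarith), Real.rpow_one]
        rw [e]; ring
    have hm1 : x ≤ (x + y) / 2 := by linarith
    have hm2 : (x + y) / 2 ≤ y := by linarith
    have e1 := hhalf x ((x + y) / 2) (by ring) (Icc_subset_Icc le_rfl hm2)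
    have e2 := hhalf ((x + y) / 2) y (by ring) (Icc_subset_Icc hm1 le_rfl)
    rw [← Icc_union_Icc_eq_Icc hm1 hm2, inter_union_distrib_left]
    refine (measure_union_le _ _).trans ((add_le_add e1 e2).trans (le_of_eq ?_))
    have : 0 ≤ k * (4 * (s / r)) * (H / r) ^ (1 / (s - 1)) * ((y - x) / 2) := by
      have : 0 < s := by linarith
      positivity
    rw [← ENNReal.ofReal_add this this]
    congr 1; ring

lemma aux_real {d : ℕ → ℝ → ℝ} {k : ℕ} {a b H G α s r : ℝ} (hk : 1 ≤ k) (hab : a < b)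
    (hH : 0 ≤ H) (hG : 0 ≤ G) (hα : 0 < α) (hr : 0 < r) (hs : s = k + α)
    (hd : DerivChain d k (Icc a b)) (hc1 : ContinuousOn (d 1) (Icc a b))
    (hh : ∀ u ∈ Icc a b, ∀ v ∈ Icc a b, |d k u - d k v| ≤ H * |u - v| ^ α)
    (hg : ∀ u ∈ Icc a b, |d 1 u| ≤ G) :
    volume (glE (d 0) (d 1) s r ∩ Icc a b) ≤
      ENNReal.ofReal (k * (4 * (s / r)) *
        max ((H / r) ^ (1 / (s - 1)) * (b - a)) ((G / r) ^ (1 / (s - 1)))) := by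
  have hk' : (1 : ℝ) ≤ k := by exact_mod_cast hk
  have hs1 : 1 < s := by linarith
  have hs0 : 0 < s := by linarith
  by_cases hn : (k : ℕ∞) ≤ {t | t ∈ Icc a b ∧ d 1 t = 0}.encard
  · have hsub : glE (d 0) (d 1) s r ∩ Icc a b ⊆
        ⋃ m : ℕ, (glE (d 0) (d 1) s r ∩ {t | 1 / ((m : ℝ) + 1) ≤ |d 1 t|}) ∩ Icc a b := by
      rintro t ⟨ht, ht2⟩
      have h1 : r * |d 0 t| ^ (1 - s⁻¹) < |d 1 t| := ht
      have h2 : 0 < |d 1 t| := lt_of_le_of_lt (by positivity) h1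
      obtain ⟨m, hm⟩ := exists_nat_one_div_lt h2
      exact mem_iUnion.2 ⟨m, ⟨ht, hm.le⟩, ht2⟩
    have hmono : Monotone (fun m : ℕ =>
        (glE (d 0) (d 1) s r ∩ {t | 1 / ((m : ℝ) + 1) ≤ |d 1 t|}) ∩ Icc a b) := by
      intro m m' hm t ht
      have h0 : (m : ℝ) ≤ m' := by exact_mod_cast hm
      have h1 : 1 / ((m' : ℝ) + 1) ≤ 1 / ((m : ℝ) + 1) := by gcongr
      have h2 : 1 / ((m : ℝ) + 1) ≤ |d 1 t| := ht.1.2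
      exact ⟨⟨ht.1.1, h1.trans h2⟩, ht.2⟩
    refine (measure_mono hsub).trans ?_
    rw [hmono.measure_iUnion]
    refine iSup_le fun m => ?_
    have hε : (0 : ℝ) < 1 / ((m : ℝ) + 1) := by positivity
    have hlim : Filter.Tendsto (fun n : ℕ => H * ((b - a) / 2 ^ n) ^ (s - 1))
        Filter.atTop (nhds 0) := by
      have h1 : Filter.Tendsto (fun n : ℕ => (b - a) / (2 : ℝ) ^ n) Filter.atTop (nhds 0) :=
        tendsto_const_nhds.div_atTop (tendsto_pow_atTop_atTop_of_one_lt (by norm_num))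
      have h2 := (h1.rpow_const (p := s - 1) (Or.inr (by linarith))).const_mul H
      rwa [Real.zero_rpow (by linarith), mul_zero] at h2
    obtain ⟨n, hn2⟩ := (hlim.eventually (gt_mem_nhds hε)).exists
    refine (aux_bisect hk hH hα hr hs hd hc1 hh n a b hab subset_rfl hn hn2).trans ?_
    apply ENNReal.ofReal_le_ofReal
    rw [mul_assoc]
    gcongr
    exact le_max_left _ _
  · refine (aux_few (f := d 0) (f' := d 1) (A := G) hs1 hr hG
      (fun t ht => hd 0 (by omega) t ht) hc1 hn hg).trans ?_
    apply ENNReal.ofReal_le_ofReal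
    rw [← mul_assoc]
    gcongr
    · norm_num
    · exact le_max_right _ _

lemma aux_final {s r N V M : ℝ} (hs : 1 < s) (hr : 0 < r) (hN : 1 ≤ N) (hV : 0 ≤ V) (hM : 0 ≤ M)
    (h : V ≤ N / r * (2 / r) ^ (1 / (s - 1)) * M ^ (s / (s - 1))) :
    r * V ^ (1 / (s / (s - 1))) ≤ 2 * N * M := by
  have hσ : 0 < s - 1 := by linarith
  have hs0 : 0 < s := by linarith
  set e := 1 / (s / (s - 1)) with he
  have he' : e = 1 - s⁻¹ := by rw [he]; field_simp
  have he0 : 0 ≤ e := by positivity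
  have he1 : e ≤ 1 := by rw [he']; have : 0 < s⁻¹ := inv_pos.2 hs0; linarith
  have h1 := Real.rpow_le_rpow hV h he0
  have e1 : 1 / (s - 1) * e = s⁻¹ := by rw [he]; field_simp
  have e2 : s / (s - 1) * e = 1 := by rw [he]; field_simp
  rw [Real.mul_rpow (by positivity) (by positivity), Real.mul_rpow (by positivity) (by positivity),
    ← Real.rpow_mul (by positivity), ← Real.rpow_mul hM, e1, e2, Real.rpow_one,
    Real.div_rpow (by positivity) hr.le, Real.div_rpow (by positivity) hr.le] at h1
  have h2 : r ^ e * r ^ s⁻¹ = r := by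
    rw [← Real.rpow_add hr, he', sub_add_cancel, Real.rpow_one]
  have h3 : N ^ e ≤ N := by
    simpa using Real.rpow_le_rpow_of_exponent_le hN he1
  have h4 : (2 : ℝ) ^ s⁻¹ ≤ 2 := by
    simpa using Real.rpow_le_rpow_of_exponent_le (show (1 : ℝ) ≤ 2 by norm_num)
      (inv_le_one_of_one_le₀ hs.le)
  have hp1 : 0 < r ^ e := by positivity
  have hp2 : 0 < r ^ s⁻¹ := by positivity
  calc r * V ^ e ≤ r * (N ^ e / r ^ e * (2 ^ s⁻¹ / r ^ s⁻¹) * M) := by gcongr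
    _ = (r ^ e * r ^ s⁻¹) * (N ^ e / r ^ e * (2 ^ s⁻¹ / r ^ s⁻¹) * M) := by rw [h2]
    _ = N ^ e * 2 ^ s⁻¹ * M := by field_simp
    _ ≤ N * 2 * M := by gcongr
    _ = 2 * N * M := by ring

lemma aux_max {s H G L : ℝ} (hs : 1 < s) (hH : 0 ≤ H) (hG : 0 ≤ G) (hL : 0 ≤ L) :
    max (H ^ (1 / (s - 1)) * L) (G ^ (1 / (s - 1))) ≤
      (max (H ^ s⁻¹ * L ^ (1 / (s / (s - 1)))) (G ^ s⁻¹)) ^ (s / (s - 1)) := by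
  have hσ : 0 < s - 1 := by linarith
  have hs0 : 0 < s := by linarith
  have e1 : s⁻¹ * (s / (s - 1)) = 1 / (s - 1) := by field_simp
  have e2 : (1 / (s / (s - 1))) * (s / (s - 1)) = 1 := by field_simp
  apply max_le
  · have := Real.rpow_le_rpow (by positivity)
      (le_max_left (H ^ s⁻¹ * L ^ (1 / (s / (s - 1)))) (G ^ s⁻¹))
      (show 0 ≤ s / (s - 1) by positivity)
    rwa [Real.mul_rpow (by positivity) (by positivity), ← Real.rpow_mul hH, ← Real.rpow_mul hL,
      e1, e2, Real.rpow_one] at this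
  · have := Real.rpow_le_rpow (by positivity)
      (le_max_right (H ^ s⁻¹ * L ^ (1 / (s / (s - 1)))) (G ^ s⁻¹))
      (show 0 ≤ s / (s - 1) by positivity)
    rwa [← Real.rpow_mul hG, e1] at this

lemma aux_proj {d : ℕ → ℝ → ℂ} {k : ℕ} {a b H G α s r : ℝ} (L : ℂ →L[ℝ] ℝ)
    (hL : ∀ z, |L z| ≤ ‖z‖) (hk : 1 ≤ k) (hab : a < b)
    (hH : 0 ≤ H) (hG : 0 ≤ G) (hα : 0 < α) (hr : 0 < r) (hs : s = k + α)
    (hd : DerivChain d k (Icc a b)) (hc1 : ContinuousOn (d 1) (Icc a b))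
    (hh : ∀ u ∈ Icc a b, ∀ v ∈ Icc a b, ‖d k u - d k v‖ ≤ H * |u - v| ^ α)
    (hg : ∀ u ∈ Icc a b, ‖d 1 u‖ ≤ G) :
    volume (glE (fun t => L (d 0 t)) (fun t => L (d 1 t)) s r ∩ Icc a b) ≤
      ENNReal.ofReal (k * (4 * (s / r)) *
        max ((H / r) ^ (1 / (s - 1)) * (b - a)) ((G / r) ^ (1 / (s - 1)))) := by
  refine aux_real (d := fun i t => L (d i t)) hk hab hH hG hα hr hs ?_ ?_ ?_ ?_
  · intro i hi x hx
    exact L.hasFDerivAt.comp_hasDerivWithinAt x (hd i hi x hx)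
  · exact L.continuous.comp_continuousOn hc1
  · intro u hu v hv
    rw [← map_sub]
    exact (hL _).trans (hh u hu v hv)
  · intro u hu
    exact (hL _).trans (hg u hu)

lemma aux_countable {g g' : ℝ → ℂ} {S : Set ℝ} (hS : ∀ t ∈ S, HasDerivAt g (g' t) t) :
    {t | t ∈ S ∧ g t = 0 ∧ g' t ≠ 0}.Countable := by
  apply (HereditarilyLindelofSpace.isLindelof _).countable_of_isDiscrete
  rw [isDiscrete_iff_nhdsNE]
  rintro t ⟨ht, h0, h1⟩
  have h2 := (hS t ht).eventually_ne (c := 0) h1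
  rw [← disjoint_iff, Filter.disjoint_principal_right]
  filter_upwards [h2] with u hu hu2
  exact hu hu2.2.1

/-- For `g ∈ C^{k,α}(Ī,ℂ)` there is a nonnegative measurable `Λ ∈ L^p_w(I)`,
`p = (k+α)/(k+α-1)`, with `|g'| ≤ Λ |g|^{1-1/(k+α)}` a.e. on `I` and
`‖Λ‖_{p,w,I} ≤ C(k) max{Höld_{α,I}(g^{(k)})^{1/(k+α)} |I|^{1/p}, ‖g'‖_∞^{1/(k+α)}}`. -/
theorem radical_glaeser (k : ℕ) (hk : 1 ≤ k) :
    ∃ C : ℝ, 0 < C ∧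
      ∀ (αe : ℝ), 0 < αe → αe ≤ 1 →
      ∀ (a b : ℝ), a < b →
      ∀ d : ℕ → ℝ → ℂ,
      DerivChain d k (Icc a b) →
      ContinuousOn (d k) (Icc a b) →
      (∃ H : ℝ, ∀ x ∈ Ioo a b, ∀ y ∈ Ioo a b, ‖d k x - d k y‖ ≤ H * |x - y| ^ αe) →
      ∃ Λ : ℝ → ℝ, Measurable Λ ∧ (∀ t, 0 ≤ Λ t) ∧
        (∀ᵐ t ∂(volume.restrict (Ioo a b)),
          ‖d 1 t‖ ≤ Λ t * ‖d 0 t‖ ^ (1 - ((k : ℝ) + αe)⁻¹)) ∧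
        ∀ r : ℝ, 0 ≤ r →
          r * (volume {t | t ∈ Ioo a b ∧ r < Λ t}).toReal ^
              (1 / (((k : ℝ) + αe) / ((k : ℝ) + αe - 1))) ≤
            C * max
              ((HolderConst αe (Ioo a b) (d k)) ^ (((k : ℝ) + αe)⁻¹) *
                (b - a) ^ (1 / (((k : ℝ) + αe) / ((k : ℝ) + αe - 1))))
              ((sSup ((fun x => ‖d 1 x‖) '' Ioo a b)) ^ (((k : ℝ) + αe)⁻¹)) := by
  have hk' : (1 : ℝ) ≤ k := by exact_mod_cast hk
  refine ⟨2 * (16 * k * (k + 1)), by positivity, ?_⟩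
  intro α hα hα1 a b hab d hd hck ⟨H₀, hH₀⟩
  set s : ℝ := (k : ℝ) + α with hs
  have hs1 : 1 < s := by linarith
  have hs0 : 0 < s := by linarith
  have hsi : 0 < 1 - s⁻¹ := by have := inv_lt_one_of_one_lt₀ hs1; linarith
  have hc0 : ContinuousOn (d 0) (Icc a b) :=
    fun t ht => (hd 0 (by omega) t ht).continuousWithinAt
  have hc1 : ContinuousOn (d 1) (Icc a b) := by
    rcases hk.eq_or_lt with h | h
    · rw [← h] at hck; exact hck
    · exact fun t ht => (hd 1 h t ht).continuousWithinAt
  set H := HolderConst α (Ioo a b) (d k) with hHdef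
  set G := sSup ((fun x => ‖d 1 x‖) '' Ioo a b) with hGdef
  have hbdd : BddAbove {ρ : ℝ | ∃ x ∈ Ioo a b, ∃ y ∈ Ioo a b, x ≠ y ∧
      ρ = ‖d k x - d k y‖ / |x - y| ^ α} := by
    refine ⟨H₀, ?_⟩
    rintro ρ ⟨x, hx, y, hy, hxy, rfl⟩
    have : 0 < |x - y| := abs_pos.2 (sub_ne_zero.2 hxy)
    rw [div_le_iff₀ (by positivity)]
    exact hH₀ x hx y hy
  have hH : 0 ≤ H := by
    apply Real.sSup_nonneg
    rintro ρ ⟨x, hx, y, hy, hxy, rfl⟩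
    positivity
  have hG : 0 ≤ G := by
    apply Real.sSup_nonneg
    rintro ρ ⟨x, hx, rfl⟩
    exact norm_nonneg _
  have hho : ∀ x ∈ Ioo a b, ∀ y ∈ Ioo a b, ‖d k x - d k y‖ ≤ H * |x - y| ^ α := by
    intro x hx y hy
    by_cases hxy : x = y
    · subst hxy; simp [Real.zero_rpow hα.ne']
    · have : 0 < |x - y| := abs_pos.2 (sub_ne_zero.2 hxy)
      rw [← div_le_iff₀ (by positivity)]
      exact le_csSup hbdd ⟨x, hx, y, hy, hxy, rfl⟩
  have hcl : closure (Ioo a b) = Icc a b := closure_Ioo hab.ne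
  have hh : ∀ u ∈ Icc a b, ∀ v ∈ Icc a b, ‖d k u - d k v‖ ≤ H * |u - v| ^ α := by
    intro u hu v hv
    have hclp : closure (Ioo a b ×ˢ Ioo a b) = Icc a b ×ˢ Icc a b := by
      rw [closure_prod_eq, hcl]
    have := le_on_closure (s := Ioo a b ×ˢ Ioo a b)
      (f := fun p : ℝ × ℝ => ‖d k p.1 - d k p.2‖) (g := fun p : ℝ × ℝ => H * |p.1 - p.2| ^ α)
      (fun p hp => hho p.1 hp.1 p.2 hp.2)
      (by
        rw [hclp]
        exact ((hck.comp continuousOn_fst (fun p hp => hp.1)).sub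
          (hck.comp continuousOn_snd (fun p hp => hp.2))).norm)
      (by
        apply Continuous.continuousOn
        exact continuous_const.mul
          ((continuous_fst.sub continuous_snd).abs.rpow_const (fun _ => Or.inr hα.le)))
      (x := (u, v)) (by rw [hclp]; exact ⟨hu, hv⟩)
    exact this
  have hg : ∀ u ∈ Icc a b, ‖d 1 u‖ ≤ G := by
    have hb : BddAbove ((fun x => ‖d 1 x‖) '' Ioo a b) :=
      (isCompact_Icc.bddAbove_image hc1.norm).mono (image_mono Ioo_subset_Icc_self)
    intro u hu
    exact le_on_closure (s := Ioo a b) (f := fun x => ‖d 1 x‖) (g := fun _ => G)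
      (fun x hx => le_csSup hb ⟨x, hx, rfl⟩) (by rw [hcl]; exact hc1.norm)
      continuousOn_const (by rw [hcl]; exact hu)
  classical
  have hm0 : Measurable ((Icc a b).piecewise (d 0) 0) :=
    hc0.measurable_piecewise continuousOn_const measurableSet_Icc
  have hm1 : Measurable ((Icc a b).piecewise (d 1) 0) :=
    hc1.measurable_piecewise continuousOn_const measurableSet_Icc
  refine ⟨fun t => ‖(Icc a b).piecewise (d 1) 0 t‖ /
    ‖(Icc a b).piecewise (d 0) 0 t‖ ^ (1 - s⁻¹), hm1.norm.div (hm0.norm.pow_const _),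
    fun t => by positivity, ?_, ?_⟩
  · have hnull : volume {t | t ∈ Ioo a b ∧ d 0 t = 0 ∧ d 1 t ≠ 0} = 0 := by
      apply Set.Countable.measure_zero
      apply aux_countable
      intro t ht
      exact (hd 0 (by omega) t (Ioo_subset_Icc_self ht)).hasDerivAt (Icc_mem_nhds ht.1 ht.2)
    rw [ae_restrict_iff' measurableSet_Ioo]
    filter_upwards [compl_mem_ae_iff.2 hnull] with t ht htI
    simp only [piecewise_eq_of_mem _ _ _ (Ioo_subset_Icc_self htI)]
    by_cases h0 : d 0 t = 0
    · have h1 : d 1 t = 0 := by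
        by_contra h1
        exact ht ⟨htI, h0, h1⟩
      rw [h1]; simp
    · have : 0 < ‖d 0 t‖ := norm_pos_iff.2 h0
      rw [div_mul_cancel₀ _ (by positivity)]
  · intro r hr
    rcases hr.eq_or_lt with h | hr
    · rw [← h, zero_mul]; positivity
    set V := volume {t | t ∈ Ioo a b ∧ r < ‖(Icc a b).piecewise (d 1) 0 t‖ /
      ‖(Icc a b).piecewise (d 0) 0 t‖ ^ (1 - s⁻¹)} with hV
    have hr2 : 0 < r / 2 := by positivity
    have b1 := aux_proj (s := s) Complex.reCLM (fun z => Complex.abs_re_le_norm z) hk hab hH hG hα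
      hr2 hs hd hc1 hh hg
    have b2 := aux_proj (s := s) Complex.imCLM (fun z => Complex.abs_im_le_norm z) hk hab hH hG hα
      hr2 hs hd hc1 hh hg
    have hVle := (measure_mono (μ := volume) (s := {t | t ∈ Ioo a b ∧
      r < ‖(Icc a b).piecewise (d 1) 0 t‖ / ‖(Icc a b).piecewise (d 0) 0 t‖ ^ (1 - s⁻¹)})
      (t := (glE (fun t => Complex.reCLM (d 0 t)) (fun t => Complex.reCLM (d 1 t)) s (r / 2) ∩
        Icc a b) ∪ (glE (fun t => Complex.imCLM (d 0 t)) (fun t => Complex.imCLM (d 1 t)) s (r / 2)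
        ∩ Icc a b)) (by
      rintro t ⟨htI, ht⟩
      have htI' := Ioo_subset_Icc_self htI
      rw [piecewise_eq_of_mem _ _ _ htI', piecewise_eq_of_mem _ _ _ htI'] at ht
      have h0 : d 0 t ≠ 0 := by
        intro h0
        rw [h0, norm_zero, Real.zero_rpow hsi.ne', div_zero] at ht
        linarith
      have hp : 0 < ‖d 0 t‖ := norm_pos_iff.2 h0
      rw [lt_div_iff₀ (by positivity)] at ht
      have htri := Complex.norm_le_abs_re_add_abs_im (d 1 t)
      have hre : |(d 0 t).re| ^ (1 - s⁻¹) ≤ ‖d 0 t‖ ^ (1 - s⁻¹) :=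
        Real.rpow_le_rpow (abs_nonneg _) (Complex.abs_re_le_norm _) hsi.le
      have him : |(d 0 t).im| ^ (1 - s⁻¹) ≤ ‖d 0 t‖ ^ (1 - s⁻¹) :=
        Real.rpow_le_rpow (abs_nonneg _) (Complex.abs_im_le_norm _) hsi.le
      by_cases hc : ‖d 1 t‖ / 2 ≤ |(d 1 t).re|
      · left
        refine ⟨?_, htI'⟩
        show r / 2 * |(d 0 t).re| ^ (1 - s⁻¹) < |(d 1 t).re|
        have := mul_le_mul_of_nonneg_left hre hr2.le
        linarith
      · right
        refine ⟨?_, htI'⟩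
        show r / 2 * |(d 0 t).im| ^ (1 - s⁻¹) < |(d 1 t).im|
        have := mul_le_mul_of_nonneg_left him hr2.le
        push Not at hc
        linarith)).trans ((measure_union_le _ _).trans (add_le_add b1 b2))
    have hba : 0 < b - a := by linarith
    have hM := aux_max hs1 hH hG hba.le
    set M := max (H ^ s⁻¹ * (b - a) ^ (1 / (s / (s - 1)))) (G ^ s⁻¹) with hMdef
    have hM0 : 0 ≤ M := le_max_of_le_right (by positivity)
    have hK : 0 ≤ k * (4 * (s / (r / 2))) *
        max ((H / (r / 2)) ^ (1 / (s - 1)) * (b - a)) ((G / (r / 2)) ^ (1 / (s - 1))) := by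
      have : 0 ≤ max ((H / (r / 2)) ^ (1 / (s - 1)) * (b - a)) ((G / (r / 2)) ^ (1 / (s - 1))) :=
        le_max_of_le_right (by positivity)
      positivity
    rw [← ENNReal.ofReal_add hK hK] at hVle
    have hV2 := ENNReal.toReal_le_of_le_ofReal (by positivity) hVle
    have hmaxeq : max ((H / (r / 2)) ^ (1 / (s - 1)) * (b - a)) ((G / (r / 2)) ^ (1 / (s - 1))) =
        (2 / r) ^ (1 / (s - 1)) * max (H ^ (1 / (s - 1)) * (b - a)) (G ^ (1 / (s - 1))) := by
      rw [mul_max_of_nonneg _ _ (by positivity),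
        show H / (r / 2) = (2 / r) * H by field_simp, show G / (r / 2) = (2 / r) * G by field_simp,
        Real.mul_rpow (by positivity) hH, Real.mul_rpow (by positivity) hG, mul_assoc]
    have hfin := aux_final (N := 16 * k * s) (V := V.toReal) (M := M) hs1 hr
      (by nlinarith) ENNReal.toReal_nonneg hM0 (by
        refine hV2.trans ?_
        rw [hmaxeq]
        calc _ = 16 * k * s / r * (2 / r) ^ (1 / (s - 1)) *
              max (H ^ (1 / (s - 1)) * (b - a)) (G ^ (1 / (s - 1))) := by
                field_simp; ring
          _ ≤ _ := by gcongr)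
    refine hfin.trans ?_
    gcongr
    linarith
end
end

section
/- Let n be a positive integer and let I ⊆ ℝ be a bounded open interval. Assume that f : I → ℂ is a continuous function such that f(t)^n = g(t) for all t ∈ I, where g ∈ C^{n-1,1}(Ī, ℂ). Then f is absolutely continuous on I, its almost-everywhere derivative f' belongs to the weak Lebesgue space L^{n'}_w(I) with n' = n/(n−1) (n' = ∞ excluded: for n = 1 the conclusion reads f' = g' ∈ L^∞), and for n ≥ 2 one has ‖f'‖_{n',w,I} ≤ C(n) · max{ (Lip_I(g^{(n-1)}))^{1/n} |I|^{1/n'}, ‖g'‖_{L^∞(I)}^{1/n} }, with a constant C(n) depending only on n. -/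
open Set MeasureTheory Real

noncomputable section

/-! ### Real-valued part -/

/-- Chain of derivatives on an interval with Lipschitz top derivative. -/
structure RC (w : ℕ → ℝ → ℝ) (m : ℕ) (a b L : ℝ) : Prop where
  der : ∀ i < m, ∀ x ∈ Icc a b, HasDerivWithinAt (w i) (w (i + 1) x) (Icc a b) x
  lip : ∀ x ∈ Icc a b, ∀ y ∈ Icc a b, |w m x - w m y| ≤ L * |x - y|

theorem RC.hasDerivAt {w : ℕ → ℝ → ℝ} {m : ℕ} {a b L : ℝ} (H : RC w m a b L) {i : ℕ}
    (hi : i < m) {x : ℝ} (hx : x ∈ Ioo a b) : HasDerivAt (w i) (w (i + 1) x) x :=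
  (H.der i hi x (Ioo_subset_Icc_self hx)).hasDerivAt (Icc_mem_nhds hx.1 hx.2)

theorem RC.contOn {w : ℕ → ℝ → ℝ} {m : ℕ} {a b L : ℝ} (H : RC w m a b L) {i : ℕ}
    (hi : i < m) : ContinuousOn (w i) (Icc a b) :=
  fun x hx => (H.der i hi x hx).continuousWithinAt

theorem RC.mvt {w : ℕ → ℝ → ℝ} {m : ℕ} {a b L : ℝ} (H : RC w m a b L) {i : ℕ}
    (hi : i < m) {x y : ℝ} (hx : a ≤ x) (hy : y ≤ b) (hxy : x < y) :
    ∃ c ∈ Ioo x y, w (i + 1) c * (y - x) = w i y - w i x := by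
  obtain ⟨c, hc, h⟩ := exists_hasDerivAt_eq_slope (w i) (w (i + 1)) hxy
    ((H.contOn hi).mono (Icc_subset_Icc hx hy))
    (fun z hz => H.hasDerivAt hi ⟨hx.trans_lt hz.1, hz.2.trans_le hy⟩)
  refine ⟨c, hc, ?_⟩
  rw [h]
  have : y - x ≠ 0 := by linarith
  field_simp

/-- constants in the interpolation inequality -/
def cst : ℕ → ℝ
  | 0 => 1
  | k + 1 => 6 * 3 ^ k * cst k

theorem cst_ge (k : ℕ) : 1 ≤ cst k := by
  induction k with
  | zero => simp [cst]
  | succ k ih =>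
    have : (1 : ℝ) ≤ 3 ^ k := one_le_pow₀ (by norm_num)
    simp only [cst]
    nlinarith

theorem cst_mono : Monotone cst := by
  refine monotone_nat_of_le_succ fun k => ?_
  have : (1 : ℝ) ≤ 3 ^ k := one_le_pow₀ (by norm_num)
  have := cst_ge k
  simp only [cst]
  nlinarith

theorem RC.exists_small {w : ℕ → ℝ → ℝ} {m : ℕ} {a b L : ℝ} (H : RC w m a b L) {M : ℝ} (k : ℕ)
    (hk : k ≤ m) : ∀ p q : ℝ, a ≤ p → q ≤ b → p < q → (∀ x ∈ Icc p q, |w 0 x| ≤ M) →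
    ∃ x ∈ Icc p q, |w k x| * (q - p) ^ k ≤ cst k * M := by
  induction k with
  | zero =>
    intro p q _ _ hpq hM
    exact ⟨p, ⟨le_rfl, hpq.le⟩, by simpa [cst] using hM p ⟨le_rfl, hpq.le⟩⟩
  | succ k ih =>
    intro p q hp hq hpq hM
    have hh : 0 < (q - p) / 3 := by linarith
    obtain ⟨x, hx, h1⟩ := ih (by omega) p (p + (q - p) / 3) hp (by linarith) (by linarith)
      (fun z hz => hM z ⟨hz.1, by linarith [hz.2]⟩)
    obtain ⟨y, hy, h2⟩ := ih (by omega) (q - (q - p) / 3) q (by linarith) hq (by linarith)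
      (fun z hz => hM z ⟨by linarith [hz.1], hz.2⟩)
    have hxy : (q - p) / 3 ≤ y - x := by linarith [hx.2, hy.1]
    obtain ⟨c, hc, h3⟩ := H.mvt (i := k) (by omega) (x := x) (y := y) (hp.trans hx.1)
      (hy.2.trans hq) (by linarith)
    refine ⟨c, ⟨hx.1.trans hc.1.le, hc.2.le.trans hy.2⟩, ?_⟩
    have e1 : (p + (q - p) / 3 - p) = (q - p) / 3 := by ring
    have e2 : (q - (q - (q - p) / 3)) = (q - p) / 3 := by ring
    rw [e1] at h1
    rw [e2] at h2
    have h4 : |w (k + 1) c| * ((q - p) / 3) ≤ |w k y| + |w k x| := by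
      calc |w (k + 1) c| * ((q - p) / 3) ≤ |w (k + 1) c| * (y - x) := by gcongr
        _ = |w k y - w k x| := by
          rw [← h3, abs_mul, abs_of_nonneg (a := y - x) (by linarith)]
        _ ≤ _ := abs_sub _ _
    have h5 : |w (k + 1) c| * ((q - p) / 3) * ((q - p) / 3) ^ k ≤ 2 * (cst k * M) := by
      calc _ ≤ (|w k y| + |w k x|) * ((q - p) / 3) ^ k := by gcongr
        _ ≤ _ := by linarith
    have h6 : |w (k + 1) c| * (q - p) ^ (k + 1) =
        3 * 3 ^ k * (|w (k + 1) c| * ((q - p) / 3) * ((q - p) / 3) ^ k) := by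
      rw [div_pow]
      field_simp
      ring
    rw [h6]
    calc _ ≤ 3 * 3 ^ k * (2 * (cst k * M)) := by gcongr
      _ = _ := by simp only [cst]; ring

theorem RC.descent {w : ℕ → ℝ → ℝ} {m : ℕ} {a b L : ℝ} (H : RC w m a b L) (hL : 0 ≤ L)
    {p q W : ℝ} (hp : a ≤ p) (hq : q ≤ b) (hpq : p < q)
    (hW : L * (q - p) ^ (m + 1) ≤ W)
    (hx : ∀ i, 1 ≤ i → i ≤ m → ∃ x ∈ Icc p q, |w i x| * (q - p) ^ i ≤ W) (j : ℕ) :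
    ∀ i, 1 ≤ i → i + j = m → ∀ x ∈ Icc p q, |w i x| * (q - p) ^ i ≤ (j + 2) * W := by
  have hh : 0 < q - p := by linarith
  have hin : ∀ x ∈ Icc p q, x ∈ Icc a b := fun x hx => ⟨hp.trans hx.1, hx.2.trans hq⟩
  have hd : ∀ x ∈ Icc p q, ∀ y ∈ Icc p q, |x - y| ≤ q - p := fun x hx y hy =>
    abs_sub_le_iff.2 ⟨by linarith [hx.2, hy.1], by linarith [hx.1, hy.2]⟩
  induction j with
  | zero =>
    intro i hi him x hxx
    obtain rfl : i = m := by omega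
    obtain ⟨y, hy, h1⟩ := hx i hi le_rfl
    have h2 : |w i x| ≤ |w i y| + L * (q - p) := by
      have h3 := H.lip x (hin x hxx) y (hin y hy)
      have h4 : L * |x - y| ≤ L * (q - p) := by gcongr; exact hd x hxx y hy
      have := abs_sub_abs_le_abs_sub (w i x) (w i y)
      linarith
    calc _ ≤ (|w i y| + L * (q - p)) * (q - p) ^ i := by gcongr
      _ = |w i y| * (q - p) ^ i + L * (q - p) ^ (i + 1) := by ring
      _ ≤ _ := by push_cast; linarith
  | succ j ih =>
    intro i hi him x hxx
    have ih' := ih (i + 1) (by omega) (by omega)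
    obtain ⟨y, hy, h1⟩ := hx i hi (by omega)
    have key : ∃ c ∈ Icc p q, |w i x - w i y| ≤ |w (i + 1) c| * (q - p) := by
      rcases lt_trichotomy x y with h | h | h
      · obtain ⟨c, hc, h3⟩ := H.mvt (i := i) (by omega) (hin x hxx).1 (hin y hy).2 h
        refine ⟨c, ⟨hxx.1.trans hc.1.le, hc.2.le.trans hy.2⟩, ?_⟩
        rw [abs_sub_comm, ← h3, abs_mul]
        gcongr
        exact hd y hy x hxx
      · exact ⟨x, hxx, by subst h; simp; positivity⟩
      · obtain ⟨c, hc, h3⟩ := H.mvt (i := i) (by omega) (hin y hy).1 (hin x hxx).2 h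
        refine ⟨c, ⟨hy.1.trans hc.1.le, hc.2.le.trans hxx.2⟩, ?_⟩
        rw [← h3, abs_mul]
        gcongr
        exact hd x hxx y hy
    obtain ⟨c, hc, h2⟩ := key
    have h3 := ih' c hc
    have h4 : |w i x| ≤ |w i y| + |w (i + 1) c| * (q - p) := by
      have := abs_sub_abs_le_abs_sub (w i x) (w i y)
      linarith
    calc _ ≤ (|w i y| + |w (i + 1) c| * (q - p)) * (q - p) ^ i := by gcongr
      _ = |w i y| * (q - p) ^ i + |w (i + 1) c| * (q - p) ^ (i + 1) := by ring
      _ ≤ _ := by push_cast; linarith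

theorem RC.interp {w : ℕ → ℝ → ℝ} {m : ℕ} {a b L : ℝ} (H : RC w m a b L) (hm : 1 ≤ m)
    (hL : 0 ≤ L) {p q M : ℝ} (hp : a ≤ p) (hq : q ≤ b) (hpq : p < q)
    (hM : ∀ x ∈ Icc p q, |w 0 x| ≤ M) : ∀ x ∈ Icc p q,
    |w 1 x| * (q - p) ≤ ((m + 1) * cst m) * (M + L * (q - p) ^ (m + 1)) := by
  intro x hx
  have hM0 : 0 ≤ M := (abs_nonneg _).trans (hM x hx)
  have hh : 0 < q - p := by linarith
  have hc := cst_ge m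
  have hLh : 0 ≤ L * (q - p) ^ (m + 1) := by positivity
  have := H.descent hL hp hq hpq (W := cst m * (M + L * (q - p) ^ (m + 1)))
    (by nlinarith) (fun i _ hi => by
      obtain ⟨y, hy, h⟩ := H.exists_small i hi p q hp hq hpq hM
      refine ⟨y, hy, h.trans ?_⟩
      have := cst_mono hi
      nlinarith [mul_nonneg (sub_nonneg.2 this) hM0]) (m - 1) 1 le_rfl (by omega) x hx
  rw [pow_one] at this
  refine this.trans (le_of_eq ?_)
  rw [Nat.cast_sub hm]
  push_cast
  ring

theorem RC.heavy {w : ℕ → ℝ → ℝ} {m : ℕ} {a b L : ℝ} (H : RC w m a b L) (hm : 1 ≤ m)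
    (hL : 0 ≤ L) {p q : ℝ} (hp : a ≤ p) (hq : q ≤ b) (hpq : p < q)
    (hz : ∀ i, 1 ≤ i → i ≤ m → ∃ x ∈ Icc p q, w i x = 0) : ∀ x ∈ Icc p q,
    |w 1 x| ≤ (m + 1) * (L * (q - p) ^ m) := by
  intro x hx
  have hh : 0 < q - p := by linarith
  have := H.descent hL hp hq hpq (W := L * (q - p) ^ (m + 1))
    le_rfl (fun i h1 hi => by
      obtain ⟨y, hy, h⟩ := hz i h1 hi
      refine ⟨y, hy, ?_⟩
      rw [h]
      simp
      positivity) (m - 1) 1 le_rfl (by omega) x hx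
  rw [pow_one, Nat.cast_sub hm] at this
  refine le_of_mul_le_mul_right (this.trans (le_of_eq ?_)) hh
  push_cast
  ring

theorem RC.side {w : ℕ → ℝ → ℝ} {m : ℕ} {a b L : ℝ} (H : RC w m a b L) (hm : 1 ≤ m)
    {x h : ℝ} (h1 : a ≤ x - h) (h2 : x + h ≤ b)
    (hz : ∀ y ∈ Ioo (x - h) (x + h), w 0 y ≠ 0 ∧ w 1 y ≠ 0) :
    (∀ y ∈ Icc (x - h) x, |w 0 y| ≤ |w 0 x|) ∨ (∀ y ∈ Icc x (x + h), |w 0 y| ≤ |w 0 x|) := by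
  by_contra hcon
  push Not at hcon
  obtain ⟨⟨y, hy, hy'⟩, z, hzz, hz'⟩ := hcon
  have hyz : y ≤ z := hy.2.trans hzz.1
  have hcont : ContinuousOn (fun t => w 0 t ^ 2) (Icc y z) :=
    ((H.contOn (i := 0) (by omega)).mono
      (Icc_subset_Icc (by linarith [hy.1]) (by linarith [hzz.2]))).pow 2
  obtain ⟨c, hc, hmin⟩ := isCompact_Icc.exists_isMinOn (nonempty_Icc.2 hyz) hcont
  have hcx : w 0 c ^ 2 ≤ w 0 x ^ 2 := hmin ⟨hy.2, hzz.1⟩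
  rw [sq_le_sq] at hcx
  have hyc : y < c := lt_of_le_of_ne hc.1 (by rintro rfl; linarith)
  have hcz : c < z := lt_of_le_of_ne hc.2 (by rintro rfl; linarith)
  have hloc := hmin.isLocalMin (Icc_mem_nhds hyc hcz)
  have hd := (H.hasDerivAt (i := 0) (by omega) (x := c)
    ⟨by linarith [hy.1], by linarith [hzz.2]⟩).pow 2
  have h0 := hloc.hasDerivAt_eq_zero hd
  have hcc := hz c ⟨by linarith [hy.1], by linarith [hzz.2]⟩
  simp at h0
  tauto

theorem RC.ptwise {w : ℕ → ℝ → ℝ} {m : ℕ} {a b L : ℝ} (H : RC w m a b L) (hm : 1 ≤ m)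
    (hL : 0 ≤ L) {x h K r : ℝ} (hK : K = 2 * ((m + 1) * cst m)) (hr : 0 < r)
    (hrL : K ^ (m + 1) * L ≤ r ^ (m + 1)) (hh : 0 < h)
    (h1 : a ≤ x - h) (h2 : x + h ≤ b)
    (hz : ∀ y ∈ Ioo (x - h) (x + h), w 0 y ≠ 0 ∧ w 1 y ≠ 0)
    (hE : r ^ (m + 1) * |w 0 x| ^ m < |w 1 x| ^ (m + 1)) :
    h ^ m * r ^ (m + 1) ≤ K ^ m * |w 1 x| := by
  have hxx := hz x ⟨by linarith, by linarith⟩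
  set C := ((m + 1) * cst m) with hC
  have hC1 : 0 < C := by have := cst_ge m; positivity
  have hK0 : 0 < K := by linarith
  set M := |w 0 x| with hMdef
  set D := |w 1 x| with hDdef
  have hM : 0 < M := abs_pos.2 hxx.1
  have hD : 0 < D := abs_pos.2 hxx.2
  have key : ∀ t, 0 < t → t ≤ h → D * t ≤ C * (M + L * t ^ (m + 1)) := by
    intro t ht hth
    rcases H.side hm h1 h2 hz with hs | hs
    · have := H.interp hm hL (p := x - t) (q := x) (M := M) (by linarith) (by linarith)
        (by linarith) (fun y hy => hs y ⟨by linarith [hy.1], hy.2⟩) x ⟨by linarith, le_rfl⟩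
      rwa [sub_sub_cancel] at this
    · have := H.interp hm hL (p := x) (q := x + t) (M := M) (by linarith) (by linarith)
        (by linarith) (fun y hy => hs y ⟨hy.1, by linarith [hy.2]⟩) x ⟨le_rfl, by linarith⟩
      rwa [add_sub_cancel_left] at this
  by_cases hc : L * h ^ (m + 1) ≤ M
  · have h3 : D * h ≤ K * M := by
      have := key h hh le_rfl
      rw [hK]
      nlinarith
    have h4 : (D * h) ^ m ≤ (K * M) ^ m := by gcongr
    rw [mul_pow, mul_pow] at h4
    have hDm : 0 < D ^ m := by positivity
    refine le_of_mul_le_mul_left ?_ hDm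
    calc D ^ m * (h ^ m * r ^ (m + 1)) = (D ^ m * h ^ m) * r ^ (m + 1) := by ring
      _ ≤ (K ^ m * M ^ m) * r ^ (m + 1) := by gcongr
      _ = K ^ m * (r ^ (m + 1) * M ^ m) := by ring
      _ ≤ K ^ m * D ^ (m + 1) := by gcongr
      _ = _ := by ring
  · exfalso
    push Not at hc
    have hLpos : 0 < L := by
      rcases hL.lt_or_eq with h' | h'
      · exact h'
      · rw [← h'] at hc
        linarith
    obtain ⟨t, ht, hte⟩ : ∃ t : ℝ, 0 < t ∧ t ^ (m + 1) = M / L := by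
      refine ⟨(M / L) ^ (((m + 1 : ℕ) : ℝ)⁻¹), by positivity, ?_⟩
      exact Real.rpow_inv_natCast_pow (by positivity) (by omega)
    have hLt : L * t ^ (m + 1) = M := by rw [hte]; field_simp
    have hth : t ≤ h := by
      by_contra hcon
      push Not at hcon
      have : L * h ^ (m + 1) ≤ L * t ^ (m + 1) := by gcongr
      linarith
    have h3 : D * t ≤ K * M := by
      have := key t ht hth
      rw [hLt] at this
      rw [hK]
      linarith
    have h4 : (D * t) ^ (m + 1) ≤ (K * M) ^ (m + 1) := by gcongr
    have h5 : (K * M) ^ (m + 1) = K ^ (m + 1) * L * M ^ m * t ^ (m + 1) := by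
      rw [mul_pow, pow_succ M, ← hLt]
      ring
    rw [h5, mul_pow] at h4
    have h6 := le_of_mul_le_mul_right h4 (by positivity)
    have h7 : K ^ (m + 1) * L * M ^ m ≤ r ^ (m + 1) * M ^ m := by gcongr
    linarith

theorem RC.zeros {w : ℕ → ℝ → ℝ} {m : ℕ} {a b L : ℝ} (H : RC w m a b L)
    {p q : ℝ} (hp : a ≤ p) (hq : q ≤ b) {i : ℕ} (him : i ≤ m)
    (hz : ∀ x ∈ Icc p q, w i x ≠ 0) (j : ℕ) : ∀ k, k + j = i →
    ∃ t : Finset ℝ, t.card ≤ j ∧ ∀ x ∈ Icc p q, w k x = 0 → x ∈ t := by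
  induction j with
  | zero =>
    intro k hk
    obtain rfl : k = i := by omega
    exact ⟨∅, by simp, fun x hx h => absurd h (hz x hx)⟩
  | succ j ih =>
    intro k hk
    obtain ⟨t, htc, ht⟩ := ih (k + 1) (by omega)
    have hcard : ∀ s : Finset ℝ, (↑s ⊆ {x | x ∈ Icc p q ∧ w k x = 0}) → s.card ≤ j + 1 := by
      intro s hs
      refine (Finset.card_le_of_interleaved (t := t) ?_).trans (by omega)
      intro x hx y hy hxy _
      have hx' := hs hx
      have hy' := hs hy
      obtain ⟨c, hc, h⟩ := H.mvt (i := k) (by omega) (hp.trans hx'.1.1) (hy'.1.2.trans hq) hxy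
      rw [hx'.2, hy'.2, sub_zero] at h
      refine ⟨c, ht c ⟨hx'.1.1.trans hc.1.le, hc.2.le.trans hy'.1.2⟩ ?_, hc.1, hc.2⟩
      rcases mul_eq_zero.1 h with h | h
      · exact h
      · linarith
    have hfin : {x | x ∈ Icc p q ∧ w k x = 0}.Finite := by
      by_contra hinf
      obtain ⟨s, hs, hsc⟩ := Set.Infinite.exists_subset_card_eq hinf (j + 2)
      have := hcard s hs
      omega
    refine ⟨hfin.toFinset, hcard _ (by simp), fun x hx h => by simpa using ⟨hx, h⟩⟩

/-- The bad set. -/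
def badSet (w : ℕ → ℝ → ℝ) (m : ℕ) (r η : ℝ) : Set ℝ :=
  {x | r ^ (m + 1) * |w 0 x| ^ m < |w 1 x| ^ (m + 1) ∧ η < |w 1 x|}

theorem RC.light {w : ℕ → ℝ → ℝ} {m : ℕ} {a b L : ℝ} (H : RC w m a b L) (hm : 1 ≤ m)
    (hL : 0 ≤ L) {K r η : ℝ} (hK : K = 2 * ((m + 1) * cst m)) (hr : 0 < r)
    (hrL : K ^ (m + 1) * L ≤ r ^ (m + 1))
    {p q : ℝ} (hp : a ≤ p) (hq : q ≤ b) (hpq : p < q) {i : ℕ} (hi1 : 1 ≤ i) (him : i ≤ m)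
    (hz : ∀ x ∈ Icc p q, w i x ≠ 0) {α : ℝ} (hα : 0 ≤ α)
    (hA : ∀ x ∈ Icc p q, |w 1 x| ≤ α ^ m * r ^ (m + 1)) :
    volume (badSet w m r η ∩ Icc p q) ≤ ENNReal.ofReal ((2 * m + 2) * (2 * K) * α) := by
  have hK0 : 0 < K := by rw [hK]; have := cst_ge m; positivity
  obtain ⟨t0, ht0c, ht0⟩ := H.zeros hp hq him hz i 0 (by omega)
  obtain ⟨t1, ht1c, ht1⟩ := H.zeros hp hq him hz (i - 1) 1 (by omega)
  set T : Finset ℝ := {p, q} ∪ (t0 ∪ t1) with hT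
  have hpT : p ∈ T := by simp [hT]
  have hqT : q ∈ T := by simp [hT]
  have hTc : T.card ≤ 2 * m + 2 := by
    have h1 := Finset.card_union_le {p, q} (t0 ∪ t1)
    have h2 := Finset.card_union_le t0 t1
    have h3 : ({p, q} : Finset ℝ).card ≤ 2 := Finset.card_le_two
    rw [← hT] at h1
    omega
  have hsub : badSet w m r η ∩ Icc p q ⊆ ⋃ z ∈ T, Metric.closedBall z (K * α) := by
    rintro x ⟨hxE, hx⟩
    obtain ⟨z, hzT, hzmin⟩ := Finset.exists_min_image T (fun z => |x - z|) ⟨p, hpT⟩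
    refine mem_iUnion₂.2 ⟨z, hzT, ?_⟩
    rw [Metric.mem_closedBall, Real.dist_eq]
    rcases (abs_nonneg (x - z)).eq_or_lt with h0 | hpos
    · rw [← h0]; positivity
    have hdp := hzmin p hpT
    have hdq := hzmin q hqT
    rw [abs_of_nonneg (a := x - p) (by linarith [hx.1])] at hdp
    rw [abs_of_nonpos (a := x - q) (by linarith [hx.2])] at hdq
    have hnz : ∀ y ∈ Ioo (x - |x - z|) (x + |x - z|), w 0 y ≠ 0 ∧ w 1 y ≠ 0 := by
      intro y hy
      have hyI : y ∈ Icc p q := ⟨by linarith [hy.1], by linarith [hy.2]⟩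
      have hyT : y ∉ T := by
        intro hyT
        have h1 := hzmin y hyT
        have h2 : |x - y| < |x - z| := abs_lt.2 ⟨by linarith [hy.2], by linarith [hy.1]⟩
        linarith
      constructor
      · intro h
        exact hyT (by simp [hT, ht0 y hyI h])
      · intro h
        exact hyT (by simp [hT, ht1 y hyI h])
    have h1 := H.ptwise hm hL hK hr hrL hpos (by linarith) (by linarith) hnz hxE.1
    have h2 : |x - z| ^ m * r ^ (m + 1) ≤ (K * α) ^ m * r ^ (m + 1) := by
      calc _ ≤ K ^ m * |w 1 x| := h1
        _ ≤ K ^ m * (α ^ m * r ^ (m + 1)) := by gcongr; exact hA x hx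
        _ = _ := by ring
    have h3 := le_of_mul_le_mul_right h2 (by positivity)
    exact (pow_le_pow_iff_left₀ (abs_nonneg _) (by positivity) (by omega)).1 h3
  calc _ ≤ volume (⋃ z ∈ T, Metric.closedBall z (K * α)) := measure_mono hsub
    _ ≤ ∑ z ∈ T, volume (Metric.closedBall z (K * α)) := measure_biUnion_finset_le _ _
    _ = T.card * ENNReal.ofReal (2 * (K * α)) := by
      simp [Real.volume_closedBall]
    _ = ENNReal.ofReal (T.card * (2 * (K * α))) := by
      rw [ENNReal.ofReal_mul (p := (T.card : ℝ)) (by positivity), ENNReal.ofReal_natCast]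
    _ ≤ _ := by
      apply ENNReal.ofReal_le_ofReal
      have : (T.card : ℝ) ≤ 2 * m + 2 := by exact_mod_cast hTc
      calc (T.card : ℝ) * (2 * (K * α)) ≤ (2 * m + 2) * (2 * (K * α)) := by gcongr
        _ = _ := by ring

theorem RC.recur {w : ℕ → ℝ → ℝ} {m : ℕ} {a b L : ℝ} (H : RC w m a b L) (hm : 1 ≤ m)
    (hL : 0 ≤ L) {K r η : ℝ} (hK : K = 2 * ((m + 1) * cst m)) (hr : 0 < r) (hη : 0 < η)
    (hrL : K ^ (m + 1) * L ≤ r ^ (m + 1)) {β : ℝ} (hβ : 0 ≤ β) (hβL : L = β ^ m * r ^ (m + 1))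
    (k : ℕ) : ∀ p q : ℝ, a ≤ p → q ≤ b → p < q →
    (∀ i, 1 ≤ i → i ≤ m → ∃ x ∈ Icc p q, w i x = 0) →
    (m + 1) * (L * (q - p) ^ m) ≤ 2 ^ k * η →
    volume (badSet w m r η ∩ Icc p q) ≤
      ENNReal.ofReal ((2 * m + 2) * (2 * K) * (2 * (m + 1)) * β * (q - p)) := by
  have hK0 : 0 < K := by rw [hK]; have := cst_ge m; positivity
  induction k with
  | zero =>
    intro p q hp hq hpq hz hk
    have : badSet w m r η ∩ Icc p q = ∅ := by
      ext x
      simp only [mem_inter_iff, mem_empty_iff_false, iff_false, not_and]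
      intro hx hx'
      have := H.heavy hm hL hp hq hpq hz x hx'
      have h2 := hx.2
      simp at hk
      linarith
    simp [this]
  | succ k ih =>
    intro p q hp hq hpq hz hk
    have hA := H.heavy hm hL hp hq hpq hz
    have half : ∀ p' q' : ℝ, p ≤ p' → q' ≤ q → q' - p' = (q - p) / 2 →
        volume (badSet w m r η ∩ Icc p' q') ≤
        ENNReal.ofReal ((2 * m + 2) * (2 * K) * (2 * (m + 1)) * β * ((q - p) / 2)) := by
      intro p' q' hp' hq' hlen
      have hh : 0 < (q - p) / 2 := by linarith
      by_cases hz' : ∀ i, 1 ≤ i → i ≤ m → ∃ x ∈ Icc p' q', w i x = 0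
      · rw [← hlen]
        refine ih p' q' (by linarith) (by linarith) (by linarith) hz' ?_
        rw [hlen]
        have h1 : ((q - p) / 2) ^ m ≤ (q - p) ^ m / 2 := by
          rw [div_pow]
          have : (2 : ℝ) ≤ 2 ^ m := by
            calc (2 : ℝ) = 2 ^ 1 := by norm_num
              _ ≤ _ := pow_le_pow_right₀ (by norm_num) hm
          gcongr
        have h2 : (m + 1) * (L * ((q - p) / 2) ^ m) ≤ (m + 1) * (L * ((q - p) ^ m / 2)) := by
          gcongr
        rw [pow_succ] at hk
        linarith
      · push Not at hz'
        obtain ⟨i, hi1, him, hzi⟩ := hz'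
        have := H.light (η := η) hm hL hK hr hrL (p := p') (q := q') (by linarith) (by linarith)
          (by linarith) hi1 him hzi (α := (m + 1) * β * (q - p))
          (by have : 0 < q - p := by linarith
              positivity) (by
            intro x hx
            refine (hA x ⟨by linarith [hx.1], by linarith [hx.2]⟩).trans ?_
            rw [hβL]
            have hmm : (m + 1 : ℝ) ≤ (m + 1) ^ m := by
              calc (m + 1 : ℝ) = (m + 1) ^ 1 := by simp
                _ ≤ _ := pow_le_pow_right₀ (by simp) hm
            have : 0 ≤ q - p := by linarith
            calc (m + 1 : ℝ) * (β ^ m * r ^ (m + 1) * (q - p) ^ m)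
                ≤ (m + 1) ^ m * (β ^ m * r ^ (m + 1) * (q - p) ^ m) := by gcongr
              _ = _ := by rw [mul_pow, mul_pow]; ring)
        refine this.trans (le_of_eq ?_)
        congr 1
        ring
    have hs : badSet w m r η ∩ Icc p q ⊆ (badSet w m r η ∩ Icc p ((p + q) / 2)) ∪
        (badSet w m r η ∩ Icc ((p + q) / 2) q) := by
      rintro x ⟨h1, h2⟩
      rcases le_total x ((p + q) / 2) with h | h
      · exact Or.inl ⟨h1, h2.1, h⟩
      · exact Or.inr ⟨h1, h, h2.2⟩
    calc _ ≤ _ := measure_mono hs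
      _ ≤ _ := measure_union_le _ _
      _ ≤ _ := add_le_add (half p ((p + q) / 2) le_rfl (by linarith) (by ring))
          (half ((p + q) / 2) q (by linarith) le_rfl (by ring))
      _ = _ := by
        have : 0 < (q - p) / 2 := by linarith
        rw [← ENNReal.ofReal_add (by positivity) (by positivity)]
        congr 1
        ring

theorem RC.main_aux {w : ℕ → ℝ → ℝ} {m : ℕ} {a b L : ℝ} (H : RC w m a b L) (hm : 1 ≤ m)
    (hab : a < b) (hL : 0 ≤ L) {K r : ℝ} (hK : K = 2 * ((m + 1) * cst m)) (hr : 0 < r)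
    (hrL : K ^ (m + 1) * L ≤ r ^ (m + 1)) {β : ℝ} (hβ : 0 ≤ β) (hβL : L = β ^ m * r ^ (m + 1))
    {α : ℝ} (hα : 0 ≤ α) (hA : ∀ x ∈ Icc a b, |w 1 x| ≤ α ^ m * r ^ (m + 1)) :
    volume (badSet w m r 0 ∩ Icc a b) ≤
      ENNReal.ofReal ((2 * m + 2) * (2 * K) * (2 * (m + 1)) * 2 * max α (β * (b - a))) := by
  have hK0 : 0 < K := by rw [hK]; have := cst_ge m; positivity
  have hba : 0 < b - a := by linarith
  have hmax : 0 ≤ max α (β * (b - a)) := hα.trans (le_max_left _ _)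
  have key : ∀ η : ℝ, 0 < η → volume (badSet w m r η ∩ Icc a b) ≤
      ENNReal.ofReal ((2 * m + 2) * (2 * K) * (2 * (m + 1)) * 2 * max α (β * (b - a))) := by
    intro η hη
    by_cases hz : ∀ i, 1 ≤ i → i ≤ m → ∃ x ∈ Icc a b, w i x = 0
    · obtain ⟨k, hk⟩ := pow_unbounded_of_one_lt ((m + 1) * (L * (b - a) ^ m) / η)
        (one_lt_two : (1 : ℝ) < 2)
      rw [div_lt_iff₀ hη] at hk
      refine (H.recur hm hL hK hr hη hrL hβ hβL k a b le_rfl le_rfl hab hz hk.le).trans ?_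
      apply ENNReal.ofReal_le_ofReal
      have := le_max_right α (β * (b - a))
      calc (2 * m + 2) * (2 * K) * (2 * (m + 1)) * β * (b - a)
          = (2 * m + 2) * (2 * K) * (2 * (m + 1)) * 1 * (β * (b - a)) := by ring
        _ ≤ (2 * m + 2) * (2 * K) * (2 * (m + 1)) * 2 * max α (β * (b - a)) := by
          gcongr
          norm_num
    · push Not at hz
      obtain ⟨i, hi1, him, hzi⟩ := hz
      refine (H.light hm hL hK hr hrL le_rfl le_rfl hab hi1 him hzi hα hA).trans ?_
      apply ENNReal.ofReal_le_ofReal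
      have := le_max_left α (β * (b - a))
      calc (2 * m + 2) * (2 * K) * α
          = (2 * m + 2) * (2 * K) * 1 * 1 * α := by ring
        _ ≤ (2 * m + 2) * (2 * K) * (2 * (m + 1)) * 2 * max α (β * (b - a)) := by
          gcongr
          · have : (0 : ℝ) ≤ m := by positivity
            linarith
          · norm_num
  have hU : badSet w m r 0 ∩ Icc a b = ⋃ k : ℕ, badSet w m r (1 / ((k : ℝ) + 1)) ∩ Icc a b := by
    ext x
    simp only [mem_iUnion, mem_inter_iff, badSet, mem_ofPred_eq]
    constructor
    · rintro ⟨⟨h1, h2⟩, h3⟩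
      obtain ⟨k, hk⟩ := exists_nat_one_div_lt h2
      exact ⟨k, ⟨h1, hk⟩, h3⟩
    · rintro ⟨k, ⟨h1, h2⟩, h3⟩
      exact ⟨⟨h1, lt_trans (by positivity) h2⟩, h3⟩
  rw [hU, Monotone.measure_iUnion]
  · exact iSup_le fun k => key _ (by positivity)
  · intro k l hkl x hx
    refine ⟨⟨hx.1.1, lt_of_le_of_lt ?_ hx.1.2⟩, hx.2⟩
    exact one_div_le_one_div_of_le (by positivity) (by have : (k:ℝ) ≤ l := by exact_mod_cast hkl
                                                       linarith)

theorem real_main (m : ℕ) (hm : 1 ≤ m) : ∃ C : ℝ, 0 < C ∧ ∀ (a b : ℝ), a < b →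
    ∀ (L A : ℝ) (w : ℕ → ℝ → ℝ), 0 ≤ L → RC w m a b L → (∀ x ∈ Icc a b, |w 1 x| ≤ A) →
    ∀ r : ℝ, 0 < r → r ^ (m + 1) * (volume (badSet w m r 0 ∩ Icc a b)).toReal ^ m ≤
      C * max (L * (b - a) ^ m) A := by
  obtain ⟨K, hK⟩ : ∃ K : ℝ, K = 2 * ((m + 1) * cst m) := ⟨_, rfl⟩
  have hK0 : 0 < K := by rw [hK]; have := cst_ge m; positivity
  set N : ℝ := (2 * m + 2) * (2 * K) * (2 * (m + 1)) * 2 with hN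
  have hN0 : 0 < N := by positivity
  refine ⟨K ^ (m + 1) + N ^ m, by positivity, ?_⟩
  intro a b hab L A w hL H hA r hr
  have hba : 0 < b - a := by linarith
  have hA0 : 0 ≤ A := (abs_nonneg _).trans (hA a ⟨le_rfl, hab.le⟩)
  have hmax : 0 ≤ max (L * (b - a) ^ m) A := hA0.trans (le_max_right _ _)
  by_cases hrL : K ^ (m + 1) * L ≤ r ^ (m + 1)
  · obtain ⟨β, hβ, hβL⟩ : ∃ β : ℝ, 0 ≤ β ∧ L = β ^ m * r ^ (m + 1) := by
      refine ⟨(L / r ^ (m + 1)) ^ ((m : ℝ)⁻¹), by positivity, ?_⟩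
      rw [Real.rpow_inv_natCast_pow (by positivity) (by omega)]
      field_simp
    obtain ⟨α, hα, hαA⟩ : ∃ α : ℝ, 0 ≤ α ∧ A = α ^ m * r ^ (m + 1) := by
      refine ⟨(A / r ^ (m + 1)) ^ ((m : ℝ)⁻¹), by positivity, ?_⟩
      rw [Real.rpow_inv_natCast_pow (by positivity) (by omega)]
      field_simp
    have h := H.main_aux hm hab hL hK hr hrL hβ hβL hα (by rwa [← hαA])
    rw [← hN] at h
    have hmx : 0 ≤ max α (β * (b - a)) := hα.trans (le_max_left _ _)
    have h' := ENNReal.toReal_le_of_le_ofReal (by positivity) h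
    have e : r ^ (m + 1) * (max α (β * (b - a))) ^ m ≤ max (L * (b - a) ^ m) A := by
      rcases max_choice α (β * (b - a)) with hc | hc
      · rw [hc]
        refine le_trans (le_of_eq ?_) (le_max_right _ _)
        rw [hαA]; ring
      · rw [hc]
        refine le_trans (le_of_eq ?_) (le_max_left _ _)
        rw [hβL, mul_pow]; ring
    calc _ ≤ r ^ (m + 1) * (N * max α (β * (b - a))) ^ m := by gcongr
      _ = N ^ m * (r ^ (m + 1) * (max α (β * (b - a))) ^ m) := by ring
      _ ≤ N ^ m * max (L * (b - a) ^ m) A := by gcongr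
      _ ≤ _ := by
        gcongr
        have : 0 < K ^ (m + 1) := by positivity
        linarith
  · push Not at hrL
    have h1 : (volume (badSet w m r 0 ∩ Icc a b)).toReal ≤ b - a := by
      apply ENNReal.toReal_le_of_le_ofReal hba.le
      exact (measure_mono inter_subset_right).trans (by simp)
    calc _ ≤ (K ^ (m + 1) * L) * (b - a) ^ m := by gcongr
      _ = K ^ (m + 1) * (L * (b - a) ^ m) := by ring
      _ ≤ (K ^ (m + 1) + N ^ m) * max (L * (b - a) ^ m) A := by
        gcongr
        · have : 0 < N ^ m := by positivity
          linarith
        · exact le_max_left _ _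

/-! ### Complex-valued part -/

theorem holder_bound {g : ℝ → ℂ} {a b : ℝ} (hab : a < b)
    (h : ∃ L : ℝ, ∀ x ∈ Icc a b, ∀ y ∈ Icc a b, ‖g x - g y‖ ≤ L * |x - y|) :
    0 ≤ HolderConst 1 (Ioo a b) g ∧ ContinuousOn g (Icc a b) ∧
    ∀ x ∈ Icc a b, ∀ y ∈ Icc a b, ‖g x - g y‖ ≤ HolderConst 1 (Ioo a b) g * |x - y| := by
  obtain ⟨L, hL⟩ := h
  have h0 : 0 ≤ HolderConst 1 (Ioo a b) g := by
    apply Real.sSup_nonneg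
    rintro r ⟨x, _, y, _, _, rfl⟩
    positivity
  have hbdd : BddAbove {r : ℝ | ∃ x ∈ Ioo a b, ∃ y ∈ Ioo a b, x ≠ y ∧
      r = ‖g x - g y‖ / |x - y| ^ (1 : ℝ)} := by
    refine ⟨L, ?_⟩
    rintro r ⟨x, hx, y, hy, hxy, rfl⟩
    have : 0 < |x - y| := abs_pos.2 (sub_ne_zero.2 hxy)
    rw [Real.rpow_one, div_le_iff₀ this]
    exact hL x (Ioo_subset_Icc_self hx) y (Ioo_subset_Icc_self hy)
  have hc : ContinuousOn g (Icc a b) := by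
    have : LipschitzOnWith L.toNNReal g (Icc a b) := by
      refine LipschitzOnWith.of_dist_le_mul fun x hx y hy => ?_
      rw [dist_eq_norm, Real.dist_eq]
      refine (hL x hx y hy).trans ?_
      gcongr
      exact Real.le_coe_toNNReal L
    exact this.continuousOn
  refine ⟨h0, hc, ?_⟩
  have hl : LipschitzOnWith (HolderConst 1 (Ioo a b) g).toNNReal g (Ioo a b) := by
    refine LipschitzOnWith.of_dist_le_mul fun x hx y hy => ?_
    rw [dist_eq_norm, Real.dist_eq, Real.coe_toNNReal _ h0]
    by_cases hxy : x = y
    · simp [hxy]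
    have hpos : 0 < |x - y| := abs_pos.2 (sub_ne_zero.2 hxy)
    rw [← div_le_iff₀ hpos]
    refine le_csSup hbdd ⟨x, hx, y, hy, hxy, ?_⟩
    rw [Real.rpow_one]
  rw [← lipschitzOnWith_closure_iff (by rwa [closure_Ioo hab.ne]), closure_Ioo hab.ne] at hl
  intro x hx y hy
  have := hl.dist_le_mul x hx y hy
  rwa [dist_eq_norm, Real.dist_eq, Real.coe_toNNReal _ h0] at this

theorem sup_bound {g : ℝ → ℂ} {a b : ℝ} (hab : a < b) (hg : ContinuousOn g (Icc a b)) :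
    ∀ x ∈ Icc a b, ‖g x‖ ≤ sSup ((fun x => ‖g x‖) '' Ioo a b) := by
  have hbdd : BddAbove ((fun x => ‖g x‖) '' Ioo a b) :=
    (isCompact_Icc.bddAbove_image hg.norm).mono (image_mono Ioo_subset_Icc_self)
  intro x hx
  rw [← closure_Ioo hab.ne] at hx hg
  exact le_on_closure (f := fun x => ‖g x‖) (g := fun _ => sSup ((fun x => ‖g x‖) '' Ioo a b))
    (fun y hy => le_csSup hbdd ⟨y, hy, rfl⟩) hg.norm continuousOn_const hx

theorem root_hasDerivAt {f g : ℝ → ℂ} {g' : ℂ} {t : ℝ} {m : ℕ} (hf : ContinuousAt f t)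
    (hfg : ∀ᶠ s in nhds t, f s ^ (m + 1) = g s) (hg : HasDerivAt g g' t) (h0 : f t ≠ 0) :
    HasDerivAt f (deriv f t) t ∧ (m + 1) * f t ^ m * deriv f t = g' := by
  have hs : HasStrictDerivAt (fun z : ℂ => z ^ (m + 1)) (((m + 1 : ℕ) : ℂ) * f t ^ m) (f t) := by
    simpa using hasStrictDerivAt_pow (m + 1) (f t)
  have hne : ((m + 1 : ℕ) : ℂ) * f t ^ m ≠ 0 :=
    mul_ne_zero (by exact_mod_cast Nat.succ_ne_zero m) (pow_ne_zero _ h0)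
  have hinv := hs.to_localInverse hne
  have hleft := (hs.hasStrictFDerivAt_equiv hne).eventually_left_inverse
  have hev : f =ᶠ[nhds t] fun s => HasStrictDerivAt.localInverse _ _ _ hs hne (g s) := by
    filter_upwards [hf.eventually hleft, hfg] with s h1 h2
    rw [← h2]
    exact h1.symm
  have hgt : g t = f t ^ (m + 1) := hfg.self_of_nhds.symm
  have hd : DifferentiableAt ℝ f t := by
    have h1 : HasDerivAt (HasStrictDerivAt.localInverse _ _ _ hs hne)
      ((((m + 1 : ℕ) : ℂ) * f t ^ m)⁻¹) (g t) := by rw [hgt]; exact hinv.hasDerivAt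
    have h2 := h1.comp_of_eq t hg rfl
    exact (h2.congr_of_eventuallyEq hev).differentiableAt
  refine ⟨hd.hasDerivAt, ?_⟩
  have h3 := hd.hasDerivAt.pow (m + 1)
  have h4 : HasDerivAt (fun s => f s ^ (m + 1)) g' t := hg.congr_of_eventuallyEq hfg
  have h5 := h3.unique h4
  simpa using h5

theorem isolated_countable (f : ℝ → ℂ) : {t | f t = 0 ∧ deriv f t ≠ 0}.Countable := by
  have : DiscreteTopology {t | f t = 0 ∧ deriv f t ≠ 0} := by
    rw [discreteTopology_subtype_iff]
    rintro x ⟨_, hx1⟩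
    have hd : HasDerivAt f (deriv f x) x := (differentiableAt_of_deriv_ne_zero hx1).hasDerivAt
    have := hd.eventually_ne hx1 (c := 0)
    rw [← disjoint_iff, Filter.disjoint_principal_right]
    filter_upwards [this] with z hz hz'
    exact hz hz'.1
  exact (countable_of_Lindelof_of_discrete : Countable {t | f t = 0 ∧ deriv f t ≠ 0}).to_set

theorem RC_of {m : ℕ} {a b H : ℝ} {d : ℕ → ℝ → ℂ} (hd : DerivChain d m (Icc a b))
    (hH : ∀ x ∈ Icc a b, ∀ y ∈ Icc a b, ‖d m x - d m y‖ ≤ H * |x - y|) :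
    RC (fun i x => (d i x).re) m a b H ∧ RC (fun i x => (d i x).im) m a b H := by
  refine ⟨⟨fun i hi x hx => ?_, fun x hx y hy => ?_⟩, ⟨fun i hi x hx => ?_, fun x hx y hy => ?_⟩⟩
  · exact Complex.reCLM.hasFDerivAt.comp_hasDerivWithinAt x (hd i hi x hx)
  · rw [← Complex.sub_re]
    exact (Complex.abs_re_le_norm _).trans (hH x hx y hy)
  · exact Complex.imCLM.hasFDerivAt.comp_hasDerivWithinAt x (hd i hi x hx)
  · rw [← Complex.sub_im]
    exact (Complex.abs_im_le_norm _).trans (hH x hx y hy)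

theorem bad_of_real {m : ℕ} {r D0 D1 x0 x1 : ℝ} (hr : 0 < r)
    (h : 2 ^ (m + 1) * (r ^ (m + 1) * D0 ^ m) < D1 ^ (m + 1)) (h1 : D1 ≤ 2 * |x1|)
    (hD1 : 0 ≤ D1) (h0 : |x0| ≤ D0) :
    r ^ (m + 1) * |x0| ^ m < |x1| ^ (m + 1) ∧ 0 < |x1| := by
  have h2 : 2 ^ (m + 1) * (r ^ (m + 1) * |x0| ^ m) < 2 ^ (m + 1) * |x1| ^ (m + 1) := by
    calc _ ≤ 2 ^ (m + 1) * (r ^ (m + 1) * D0 ^ m) := by gcongr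
      _ < _ := h
      _ ≤ (2 * |x1|) ^ (m + 1) := by gcongr
      _ = _ := mul_pow _ _ _
  have h3 := lt_of_mul_lt_mul_left h2 (by positivity)
  refine ⟨h3, ?_⟩
  by_contra hc
  have : |x1| = 0 := le_antisymm (not_lt.1 hc) (abs_nonneg _)
  rw [this] at h3
  have : 0 ≤ r ^ (m + 1) * |x0| ^ m := by positivity
  simp at h3
  linarith

theorem bad_cover {m : ℕ} (hm : 1 ≤ m) {a b : ℝ} {d : ℕ → ℝ → ℂ}
    (hd : DerivChain d m (Icc a b)) {f : ℝ → ℂ} (hf : ContinuousOn f (Ioo a b))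
    (hfg : ∀ t ∈ Ioo a b, f t ^ (m + 1) = d 0 t) {t : ℝ} (ht : t ∈ Ioo a b) (h0 : f t ≠ 0) :
    HasDerivAt f (deriv f t) t ∧ (m + 1) * f t ^ m * deriv f t = d 1 t :=
  root_hasDerivAt (hf.continuousAt (Ioo_mem_nhds ht.1 ht.2))
    (Filter.eventually_of_mem (Ioo_mem_nhds ht.1 ht.2) hfg)
    ((hd 0 (by omega) t (Ioo_subset_Icc_self ht)).hasDerivAt (Icc_mem_nhds ht.1 ht.2)) h0

theorem weak_main (m : ℕ) (hm : 1 ≤ m) : ∃ C : ℝ, 0 < C ∧ ∀ (a b : ℝ), a < b →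
    ∀ d : ℕ → ℝ → ℂ, MemCk1 d m (Icc a b) → ∀ f : ℝ → ℂ, ContinuousOn f (Ioo a b) →
    (∀ t ∈ Ioo a b, f t ^ (m + 1) = d 0 t) → ∀ r : ℝ, 0 < r →
    r ^ (m + 1) * (volume {t | t ∈ Ioo a b ∧ r < ‖deriv f t‖}).toReal ^ m ≤
      C * max (HolderConst 1 (Ioo a b) (d m) * (b - a) ^ m)
        (sSup ((fun x => ‖d 1 x‖) '' Ioo a b)) := by
  obtain ⟨C, hC, hmain⟩ := real_main m hm
  refine ⟨2 ^ m * C, by positivity, ?_⟩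
  intro a b hab d hd f hf hfg r hr
  obtain ⟨hH0, hcm, hH⟩ := holder_bound hab hd.2
  have hc1 : ContinuousOn (d 1) (Icc a b) := by
    rcases hm.eq_or_lt with h | h
    · rw [h]; exact hcm
    · exact fun x hx => (hd.1 1 h x hx).continuousWithinAt
  have hA := sup_bound hab hc1
  set L := HolderConst 1 (Ioo a b) (d m)
  set A := sSup ((fun x => ‖d 1 x‖) '' Ioo a b)
  obtain ⟨hre, him⟩ := RC_of hd.1 hH
  have h1 := hmain a b hab L A _ hH0 hre
    (fun x hx => (Complex.abs_re_le_norm _).trans (hA x hx)) r hr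
  have h2 := hmain a b hab L A _ hH0 him
    (fun x hx => (Complex.abs_im_le_norm _).trans (hA x hx)) r hr
  set S1 := badSet (fun i x => (d i x).re) m r 0 ∩ Icc a b
  set S2 := badSet (fun i x => (d i x).im) m r 0 ∩ Icc a b
  have hfin1 : volume S1 ≠ ⊤ :=
    ((measure_mono inter_subset_right).trans_lt (by simp : volume (Icc a b) < ⊤)).ne
  have hfin2 : volume S2 ≠ ⊤ :=
    ((measure_mono inter_subset_right).trans_lt (by simp : volume (Icc a b) < ⊤)).ne
  have hsub : {t | t ∈ Ioo a b ∧ r < ‖deriv f t‖} ⊆ S1 ∪ S2 ∪ {t | f t = 0 ∧ deriv f t ≠ 0} := by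
    rintro t ⟨ht, htr⟩
    have hpos : 0 < ‖deriv f t‖ := hr.trans htr
    by_cases h0 : f t = 0
    · exact Or.inr ⟨h0, norm_pos_iff.1 hpos⟩
    left
    obtain ⟨-, he⟩ := bad_cover hm hd.1 hf hfg ht h0
    have hn1 : ‖d 1 t‖ = (m + 1) * ‖f t‖ ^ m * ‖deriv f t‖ := by
      rw [← he, norm_mul, norm_mul, norm_pow]
      congr 2
      exact_mod_cast Complex.norm_natCast (m + 1)
    have hn0 : ‖d 0 t‖ = ‖f t‖ ^ (m + 1) := by rw [← hfg t ht, norm_pow]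
    have hF : 0 < ‖f t‖ := norm_pos_iff.2 h0
    have hm2 : (2 : ℝ) ≤ m + 1 := by
      have : (1 : ℝ) ≤ m := by exact_mod_cast hm
      linarith
    have hineq : 2 ^ (m + 1) * (r ^ (m + 1) * ‖d 0 t‖ ^ m) < ‖d 1 t‖ ^ (m + 1) := by
      have : ‖d 1 t‖ ^ (m + 1) =
          (m + 1) ^ (m + 1) * (‖deriv f t‖ ^ (m + 1) * ‖d 0 t‖ ^ m) := by
        rw [hn1, hn0, mul_pow, mul_pow, ← pow_mul, ← pow_mul, mul_comm m (m + 1)]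
        ring
      rw [this]
      have hd0 : 0 < ‖d 0 t‖ ^ m := by rw [hn0]; positivity
      calc 2 ^ (m + 1) * (r ^ (m + 1) * ‖d 0 t‖ ^ m)
          < 2 ^ (m + 1) * (‖deriv f t‖ ^ (m + 1) * ‖d 0 t‖ ^ m) := by
            gcongr
        _ ≤ _ := by gcongr
    have hsum := Complex.norm_le_abs_re_add_abs_im (d 1 t)
    rcases le_total |(d 1 t).im| |(d 1 t).re| with hle | hle
    · exact Or.inl ⟨bad_of_real hr hineq (by linarith) (norm_nonneg _)
        (Complex.abs_re_le_norm _), Ioo_subset_Icc_self ht⟩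
    · exact Or.inr ⟨bad_of_real hr hineq (by linarith) (norm_nonneg _)
        (Complex.abs_im_le_norm _), Ioo_subset_Icc_self ht⟩
  have hV : (volume {t | t ∈ Ioo a b ∧ r < ‖deriv f t‖}).toReal ≤
      2 * max (volume S1).toReal (volume S2).toReal := by
    have h3 : volume {t | t ∈ Ioo a b ∧ r < ‖deriv f t‖} ≤ volume S1 + volume S2 := by
      calc _ ≤ _ := measure_mono hsub
        _ ≤ volume (S1 ∪ S2) + volume {t | f t = 0 ∧ deriv f t ≠ 0} := measure_union_le _ _
        _ = volume (S1 ∪ S2) := by rw [(isolated_countable f).measure_zero, add_zero]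
        _ ≤ _ := measure_union_le _ _
    have h4 := ENNReal.toReal_mono (ENNReal.add_ne_top.2 ⟨hfin1, hfin2⟩) h3
    rw [ENNReal.toReal_add hfin1 hfin2] at h4
    have := le_max_left (volume S1).toReal (volume S2).toReal
    have := le_max_right (volume S1).toReal (volume S2).toReal
    linarith
  calc _ ≤ r ^ (m + 1) * (2 * max (volume S1).toReal (volume S2).toReal) ^ m := by gcongr
    _ = 2 ^ m * (r ^ (m + 1) * (max (volume S1).toReal (volume S2).toReal) ^ m) := by
      rw [mul_pow]; ring
    _ ≤ 2 ^ m * (C * max (L * (b - a) ^ m) A) := by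
      refine mul_le_mul_of_nonneg_left ?_ (by positivity)
      rcases max_choice (volume S1).toReal (volume S2).toReal with h | h <;> rw [h] <;> assumption
    _ = _ := by ring

/-! ### Absolute continuity -/

theorem lint_finite {φ : ℝ → ℝ} (hφ : Measurable φ) (hφ0 : ∀ t, 0 ≤ φ t) {a b B : ℝ} (hB : 0 ≤ B)
    {m : ℕ} (hm : 1 ≤ m)
    (h : ∀ r : ℝ, 0 < r → r ^ (m + 1) * (volume {t | t ∈ Ioo a b ∧ r < φ t}).toReal ^ m ≤ B) :
    ∫⁻ t in Ioo a b, ENNReal.ofReal (φ t) ≠ ⊤ := by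
  rw [lintegral_eq_lintegral_meas_lt _ (Filter.Eventually.of_forall hφ0) hφ.aemeasurable]
  have hms : ∀ r : ℝ, MeasurableSet {t | r < φ t} := fun r => measurableSet_lt measurable_const hφ
  have heq : ∀ r : ℝ, (volume.restrict (Ioo a b)) {t | r < φ t} =
      volume {t | t ∈ Ioo a b ∧ r < φ t} := by
    intro r
    rw [Measure.restrict_apply (hms r), inter_comm]
    rfl
  have hle : ∀ r : ℝ, volume {t | t ∈ Ioo a b ∧ r < φ t} ≤ ENNReal.ofReal (b - a) := by
    intro r
    refine (measure_mono (t := Ioo a b) (fun t ht => ht.1)).trans (by simp)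
  have hm0 : (m : ℝ) ≠ 0 := by exact_mod_cast (by omega : m ≠ 0)
  have hmpos : (0 : ℝ) < m := by positivity
  have hbd : ∀ r : ℝ, 0 < r → volume {t | t ∈ Ioo a b ∧ r < φ t} ≤
      ENNReal.ofReal (B ^ ((m : ℝ)⁻¹) * r ^ (-(1 + (m : ℝ)⁻¹))) := by
    intro r hr
    set V := volume {t | t ∈ Ioo a b ∧ r < φ t} with hV
    have hVt : V ≠ ⊤ := ((hle r).trans_lt ENNReal.ofReal_lt_top).ne
    rw [← ENNReal.ofReal_toReal hVt]
    apply ENNReal.ofReal_le_ofReal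
    have h1 : V.toReal ^ m ≤ B * r ^ (-((m : ℝ) + 1)) := by
      have := h r hr
      rw [Real.rpow_neg hr.le, ← div_eq_mul_inv, le_div_iff₀ (by positivity)]
      have e : r ^ ((m : ℝ) + 1) = r ^ (m + 1) := by exact_mod_cast Real.rpow_natCast r (m + 1)
      rw [e, mul_comm]
      exact this
    calc V.toReal = (V.toReal ^ m) ^ ((m : ℝ)⁻¹) :=
          (Real.pow_rpow_inv_natCast ENNReal.toReal_nonneg (by omega)).symm
      _ ≤ (B * r ^ (-((m : ℝ) + 1))) ^ ((m : ℝ)⁻¹) := by gcongr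
      _ = _ := by
        rw [Real.mul_rpow hB (by positivity), ← Real.rpow_mul hr.le]
        congr 2
        field_simp
  rw [← Ioc_union_Ioi_eq_Ioi (zero_le_one (α := ℝ)),
    lintegral_union measurableSet_Ioi (Ioc_disjoint_Ioi le_rfl)]
  refine ENNReal.add_ne_top.2 ⟨?_, ?_⟩
  · refine (lt_of_le_of_lt (lintegral_mono (g := fun _ => ENNReal.ofReal (b - a)) fun r => ?_)
      ?_).ne
    · simp only [heq]
      exact hle r
    · simp
  · refine (lt_of_le_of_lt (setLIntegral_mono' (g := fun r =>
      ENNReal.ofReal (B ^ ((m : ℝ)⁻¹) * r ^ (-(1 + (m : ℝ)⁻¹)))) measurableSet_Ioi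
      fun r hr => ?_) ?_).ne
    · simp only [heq]
      exact hbd r (zero_lt_one.trans hr)
    · have hi : IntegrableOn (fun r : ℝ => B ^ ((m : ℝ)⁻¹) * r ^ (-(1 + (m : ℝ)⁻¹))) (Ioi 1) := by
        apply Integrable.const_mul
        refine (integrableOn_Ioi_rpow_iff zero_lt_one).2 ?_
        have : 0 < (m : ℝ)⁻¹ := by positivity
        linarith
      exact hi.lintegral_lt_top

theorem ftc_nz {f : ℝ → ℂ} {u v : ℝ} (huv : u ≤ v) (hf : ContinuousOn f (Icc u v))
    (hd : ∀ t ∈ Ioo u v, HasDerivAt f (deriv f t) t)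
    (hi : IntegrableOn (deriv f) (Ioo u v)) :
    ‖f v - f u‖ₑ ≤ ∫⁻ t in Ioo u v, ‖deriv f t‖ₑ := by
  have hii : IntervalIntegrable (deriv f) volume u v := by
    rw [intervalIntegrable_iff_integrableOn_Ioo_of_le huv]
    exact hi
  rw [← intervalIntegral.integral_eq_sub_of_hasDerivAt_of_le huv hf hd hii,
    intervalIntegral.integral_of_le huv, ← restrict_Ioo_eq_restrict_Ioc]
  exact enorm_integral_le_lintegral_enorm _

theorem ftc_le {f : ℝ → ℂ} {u v : ℝ} (huv : u ≤ v) (hf : ContinuousOn f (Icc u v))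
    (hd : ∀ t ∈ Icc u v, f t ≠ 0 → HasDerivAt f (deriv f t) t)
    (hi : IntegrableOn (deriv f) (Ioo u v)) :
    ‖f v - f u‖ₑ ≤ ∫⁻ t in Ioo u v, ‖deriv f t‖ₑ := by
  by_cases hz : ∃ t ∈ Icc u v, f t = 0
  · have hcl : IsCompact (Icc u v ∩ f ⁻¹' {0}) :=
      isCompact_Icc.of_isClosed_subset (hf.preimage_isClosed_of_isClosed isClosed_Icc
        isClosed_singleton) inter_subset_left
    have hne : (Icc u v ∩ f ⁻¹' {0}).Nonempty := by
      obtain ⟨t, h1, h2⟩ := hz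
      exact ⟨t, h1, h2⟩
    obtain ⟨z1, ⟨hz1, hz1'⟩, hl⟩ := hcl.exists_isLeast hne
    obtain ⟨z2, ⟨hz2, hz2'⟩, hg⟩ := hcl.exists_isGreatest hne
    have h12 : z1 ≤ z2 := hl ⟨hz2, hz2'⟩
    simp only [mem_preimage, mem_singleton_iff] at hz1' hz2'
    have A1 := ftc_nz hz1.1 (hf.mono (Icc_subset_Icc_right hz1.2)) (fun t ht => hd t
      ⟨ht.1.le, ht.2.le.trans hz1.2⟩ (fun h0 => absurd (hl ⟨⟨ht.1.le, ht.2.le.trans hz1.2⟩, h0⟩)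
        (not_le.2 ht.2))) (hi.mono_set (Ioo_subset_Ioo_right hz1.2))
    have A2 := ftc_nz hz2.2 (hf.mono (Icc_subset_Icc_left hz2.1)) (fun t ht => hd t
      ⟨hz2.1.trans ht.1.le, ht.2.le⟩ (fun h0 => absurd (hg ⟨⟨hz2.1.trans ht.1.le, ht.2.le⟩, h0⟩)
        (not_le.2 ht.1))) (hi.mono_set (Ioo_subset_Ioo_left hz2.1))
    have hdis : Disjoint (Ioo u z1) (Ioo z2 v) := by
      rw [Set.disjoint_left]
      intro x hx hx'
      linarith [hx.2, hx'.1]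
    calc ‖f v - f u‖ₑ = ‖(f z1 - f u) + (f v - f z2)‖ₑ := by rw [hz1', hz2']; congr 1; ring
      _ ≤ ‖f z1 - f u‖ₑ + ‖f v - f z2‖ₑ := enorm_add_le _ _
      _ ≤ _ := add_le_add A1 A2
      _ = ∫⁻ t in Ioo u z1 ∪ Ioo z2 v, ‖deriv f t‖ₑ := (lintegral_union measurableSet_Ioo hdis).symm
      _ ≤ _ := lintegral_mono_set (union_subset (Ioo_subset_Ioo_right hz1.2)
        (Ioo_subset_Ioo_left hz2.1))
  · push Not at hz
    exact ftc_nz huv hf (fun t ht => hd t (Ioo_subset_Icc_self ht)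
      (hz t (Ioo_subset_Icc_self ht))) hi

theorem absCont_of {f : ℝ → ℂ} {a b : ℝ} (hf : ContinuousOn f (Ioo a b))
    (hd : ∀ t ∈ Ioo a b, f t ≠ 0 → HasDerivAt f (deriv f t) t)
    (hi : ∫⁻ t in Ioo a b, ‖deriv f t‖ₑ ≠ ⊤) : AbsContOn f (Ioo a b) := by
  have hfint : IntegrableOn (deriv f) (Ioo a b) :=
    ⟨(measurable_deriv f).aestronglyMeasurable, lt_top_iff_ne_top.2 hi⟩
  intro ε hε
  obtain ⟨δ, hδ, H⟩ := exists_pos_setLIntegral_lt_of_measure_lt hi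
    (ε := ENNReal.ofReal ε) (by simpa using hε)
  obtain ⟨δ', hδ', hδδ⟩ : ∃ δ' : ℝ, 0 < δ' ∧ ENNReal.ofReal δ' ≤ δ := by
    by_cases h : δ = ⊤
    · exact ⟨1, one_pos, by simp [h]⟩
    · exact ⟨δ.toReal, ENNReal.toReal_pos hδ.ne' h, by rw [ENNReal.ofReal_toReal h]⟩
  refine ⟨δ', hδ', ?_⟩
  intro N u v huv hdis hsum
  have hsubs : ∀ i, Ioo (u i) (v i) ⊆ Ioo a b := fun i =>
    Ioo_subset_Icc_self.trans (huv i).2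
  have hmeas : volume (⋃ i, Ioo (u i) (v i)) < δ := by
    calc _ ≤ ∑ i, volume (Ioo (u i) (v i)) := measure_iUnion_fintype_le _ _
      _ = ENNReal.ofReal (∑ i, (v i - u i)) := by
        rw [ENNReal.ofReal_sum_of_nonneg fun i _ => by linarith [(huv i).1]]
        simp
      _ < ENNReal.ofReal δ' := (ENNReal.ofReal_lt_ofReal_iff hδ').2 hsum
      _ ≤ δ := hδδ
  have h1 := H (⋃ i, Ioo (u i) (v i)) ((Measure.restrict_apply_le _ _).trans_lt hmeas)
  rw [Measure.restrict_restrict (MeasurableSet.iUnion fun i => measurableSet_Ioo),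
    inter_eq_left.2 (iUnion_subset hsubs),
    lintegral_iUnion (fun i => measurableSet_Ioo) (fun i j hij => hdis i j hij),
    tsum_fintype] at h1
  have h2 : ENNReal.ofReal (∑ i, ‖f (v i) - f (u i)‖) < ENNReal.ofReal ε := by
    refine lt_of_le_of_lt ?_ h1
    rw [ENNReal.ofReal_sum_of_nonneg fun i _ => norm_nonneg _]
    refine Finset.sum_le_sum fun i _ => ?_
    rw [ofReal_norm]
    exact ftc_le (huv i).1 (hf.mono (huv i).2) (fun t ht => hd t ((huv i).2 ht))
      (hfint.mono_set (hsubs i))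
  exact (ENNReal.ofReal_lt_ofReal_iff hε).1 h2

/-- If `f` is continuous on a bounded open interval `I` and `f^n = g`
with `g ∈ C^{n-1,1}(Ī,ℂ)`, then `f` is absolutely continuous on `I` and, for `n ≥ 2`,
its a.e. derivative lies in weak-`L^{n'}`, `n' = n/(n-1)`, with
`‖f'‖_{n',w,I} ≤ C(n) max{Lip_I(g^{(n-1)})^{1/n} |I|^{1/n'}, ‖g'‖_∞^{1/n}}`. -/
theorem radical_weak_Lp (n : ℕ) (hn : 1 ≤ n) :
    ∃ C : ℝ, 0 < C ∧
      ∀ (a b : ℝ), a < b →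
      ∀ d : ℕ → ℝ → ℂ,
      MemCk1 d (n - 1) (Icc a b) →
      ∀ f : ℝ → ℂ, ContinuousOn f (Ioo a b) →
      (∀ t ∈ Ioo a b, f t ^ n = d 0 t) →
      AbsContOn f (Ioo a b) ∧
      (2 ≤ n →
        ∀ r : ℝ, 0 ≤ r →
          r * (volume {t | t ∈ Ioo a b ∧ r < ‖deriv f t‖}).toReal ^
              (1 / ((n : ℝ) / ((n : ℝ) - 1))) ≤
            C * max
              ((HolderConst 1 (Ioo a b) (d (n - 1))) ^ ((n : ℝ)⁻¹) *
                (b - a) ^ (1 / ((n : ℝ) / ((n : ℝ) - 1))))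
              ((sSup ((fun x => ‖d 1 x‖) '' Ioo a b)) ^ ((n : ℝ)⁻¹))) := by
  rcases hn.eq_or_lt with h1 | h2
  · subst h1
    refine ⟨1, one_pos, fun a b hab d hd f hf hfg => ⟨?_, fun h => absurd h (by norm_num)⟩⟩
    obtain ⟨-, L, hL⟩ := hd
    intro ε hε
    have hL1 : 0 < |L| + 1 := by positivity
    refine ⟨ε / (|L| + 1), by positivity, ?_⟩
    intro N u v huv _ hsum
    rw [lt_div_iff₀ hL1] at hsum
    refine lt_of_le_of_lt ?_ hsum
    rw [Finset.sum_mul]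
    refine Finset.sum_le_sum fun i _ => ?_
    have hu : u i ∈ Ioo a b := (huv i).2 ⟨le_rfl, (huv i).1⟩
    have hv : v i ∈ Ioo a b := (huv i).2 ⟨(huv i).1, le_rfl⟩
    have e1 := hfg _ hu
    have e2 := hfg _ hv
    rw [pow_one] at e1 e2
    rw [e1, e2]
    have h3 := hL _ (Ioo_subset_Icc_self hv) _ (Ioo_subset_Icc_self hu)
    have h4 : 0 ≤ v i - u i := by linarith [(huv i).1]
    rw [abs_of_nonneg h4] at h3
    refine h3.trans ?_
    rw [mul_comm]
    gcongr
    linarith [le_abs_self L]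
  · obtain ⟨m, rfl⟩ : ∃ m, n = m + 1 := ⟨n - 1, by omega⟩
    have hm : 1 ≤ m := by omega
    obtain ⟨C, hC, hmain⟩ := weak_main m hm
    rw [Nat.add_sub_cancel]
    refine ⟨C ^ (((m + 1 : ℕ) : ℝ)⁻¹), by positivity, ?_⟩
    intro a b hab d hd f hf hfg
    have hw := hmain a b hab d hd f hf hfg
    have hH0 := (holder_bound hab hd.2).1
    have hA0 : 0 ≤ sSup ((fun x => ‖d 1 x‖) '' Ioo a b) := by
      apply Real.sSup_nonneg
      rintro _ ⟨x, _, rfl⟩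
      positivity
    have hba : 0 < b - a := by linarith
    set L := HolderConst 1 (Ioo a b) (d m)
    set A := sSup ((fun x => ‖d 1 x‖) '' Ioo a b)
    have hmax : 0 ≤ max (L * (b - a) ^ m) A := hA0.trans (le_max_right _ _)
    constructor
    · refine absCont_of hf (fun t ht h0 => (bad_cover hm hd.1 hf hfg ht h0).1) ?_
      have := lint_finite (φ := fun t => ‖deriv f t‖) (measurable_deriv f).norm
        (fun t => norm_nonneg _) (mul_nonneg hC.le hmax) hm hw
      simpa only [ofReal_norm] using this
    · intro _ r hr
      have hexp : (1 / (((m + 1 : ℕ) : ℝ) / (((m + 1 : ℕ) : ℝ) - 1))) =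
          (m : ℝ) * ((m + 1 : ℕ) : ℝ)⁻¹ := by
        push_cast
        rw [add_sub_cancel_right, one_div_div]
        rfl
      rw [hexp]
      rcases hr.eq_or_lt with h0 | hr
      · rw [← h0, zero_mul]
        have : 0 ≤ max (L ^ (((m + 1 : ℕ) : ℝ)⁻¹) * (b - a) ^ ((m : ℝ) * ((m + 1 : ℕ) : ℝ)⁻¹))
          (A ^ (((m + 1 : ℕ) : ℝ)⁻¹)) := le_max_of_le_right (by positivity)
        positivity
      have hV0 := ENNReal.toReal_nonneg (a := volume {t | t ∈ Ioo a b ∧ r < ‖deriv f t‖})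
      have hwr := hw r hr
      set V := (volume {t | t ∈ Ioo a b ∧ r < ‖deriv f t‖}).toReal
      have hroot := Real.rpow_le_rpow (by positivity) hwr
        (by positivity : 0 ≤ (((m + 1 : ℕ) : ℝ)⁻¹))
      rw [Real.mul_rpow (by positivity) (by positivity), Real.mul_rpow hC.le hmax,
        Real.pow_rpow_inv_natCast hr.le (by omega), ← Real.rpow_natCast V m,
        ← Real.rpow_mul hV0] at hroot
      refine hroot.trans ?_
      gcongr
      rcases max_choice (L * (b - a) ^ m) A with h | h
      · rw [h, Real.mul_rpow hH0 (by positivity), ← Real.rpow_natCast (b - a) m,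
          ← Real.rpow_mul hba.le]
        exact le_max_left _ _
      · rw [h]
        exact le_max_right _ _
end
end
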